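/- arXiv:1805.01504 — 2 statements merged into one kernel-verified Lean document; each statement's English description precedes it below -/
import Mathlib

section
/- Let P ⊂ ℝ^n be a full-dimensional simple lattice polytope with the vertex data u_F, m_v^F, G(σ_v), χ_γ described in the context, and let y ∈ ℝ. Let z ∈ ℂ^n be such that χ_γ(m_v^F)·exp(⟨m_v^F, z⟩) ≠ 1 for every vertex v of P, every γ ∈ G(σ_v), and every F ∈ 𝓕^v. Then Σ_{E face of P, including P} (y+1)^{dim E} (−y)^{n − dim E} · Σ_{m ∈ ℤ^n ∩ E} exp(⟨m,z⟩) = Σ_{v vertex of P} (exp(⟨v,z⟩)/|G(σ_v)|) · Σ_{γ ∈ G(σ_v)} Π_{F ∈ 𝓕^v} ( (y+1)/(1 − χ_γ(m_v^F)·exp(⟨m_v^F, z⟩)) − y ). -/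
/-!
Both sides are shown to be the same weighted exponential sum over the lattice points of `P`.

*The face side.* A point `p` of `P` lying on exactly `k` facets belongs to the faces `faceOf T`
for the subsets `T` of these facets, and `faceOf T` has dimension `n - #T` because `P` is simple.
By the binomial theorem the coefficient of `exp ⟨p, z⟩` is `(y + 1) ^ (n - k)` (`face_sum_eq`).

*The vertex side.* Suppose first that `Re ⟨m_v^F, z⟩ ≠ 0` for all vertices `v` and all facets
`F` through `v`. Each factor `(y + 1) / (1 - t) - y` with `‖t‖ ≠ 1` is a Laurent series
(`hasSum_wt`), and averaging over `G(σ_v)` keeps exactly the lattice points (`sum_char`). Hence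
the term of `v` is the sum over all lattice points `p` of `exp ⟨p, z⟩` weighted by a product over
the facets through `v`, where the factors of the facets with `Re ⟨m_v^F, z⟩ > 0` are flipped
(`hasSum_vertex`).

*Comparison.* For a fixed `p`, the sum over `v` of these weights is
`(y + 1) ^ (n - #facets through p)` if `p ∈ P` and `0` otherwise (`SimpData.sum_wt`), a weighted
form of the Lawrence–Varchenko decomposition. Expanding the products, the sum becomes one over the
nonempty faces, each occurring at the unique vertex minimizing the functional `ξ = Re z` on it;
so it is independent of the generic vector `ξ` (`SimpData.sum_flip`). It is then evaluated with a
`ξ` adapted to `p`, for which at most one vertex contributes.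

An arbitrary admissible `z` is the limit of its perturbations along a generic real direction, and
both sides are continuous there (`brion`).
-/

open scoped Pointwise Classical
open MeasureTheory Polynomial

noncomputable section

/-- The real vector corresponding to an integer vector in `ℤ^n ⊂ ℝ^n`. -/
def intVec {n : ℕ} (m : Fin n → ℤ) : Fin n → ℝ := fun i => (m i : ℝ)

/-- `F` is a face of the polytope `P`: either `P` itself or a nonempty set of maximizers
over `P` of a linear functional. -/
def IsFaceOf {n : ℕ} (P F : Set (Fin n → ℝ)) : Prop :=
  F = P ∨ (F.Nonempty ∧ ∃ u : (Fin n → ℝ) →ₗ[ℝ] ℝ,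
    F = {x | x ∈ P ∧ ∀ p ∈ P, u p ≤ u x})

/-- The dimension of (the affine span of) a face. -/
noncomputable def faceDim {n : ℕ} (F : Set (Fin n → ℝ)) : ℕ :=
  Module.finrank ℝ (affineSpan ℝ F).direction

/-- A polytope `P ⊂ ℝ^n` is simple if every vertex (`0`-dimensional face) lies on
exactly `n` edges (`1`-dimensional faces). -/
def IsSimple {n : ℕ} (P : Set (Fin n → ℝ)) : Prop :=
  ∀ v, IsFaceOf P v → faceDim v = 0 →
    {E | IsFaceOf P E ∧ faceDim E = 1 ∧ v ⊆ E}.ncard = n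

/-- The pairing `⟨x, z⟩ = ∑ i, x i * z i` of a real vector with a complex vector,
extended complex-bilinearly. -/
def cpair {n : ℕ} (x : Fin n → ℝ) (z : Fin n → ℂ) : ℂ := ∑ i, (x i : ℂ) * z i

/-- `U(σ_v)`: the subgroup of `ℤ^n` generated by the primitive normals `u_F` of the
facets `F ∈ 𝓕^v` containing the vertex `v = x` (enumerated by `Fv x : Fin n → _`). -/
def normalLattice {n : ℕ} (u : Set (Fin n → ℝ) → (Fin n → ℤ))
    (Fv : (Fin n → ℝ) → Fin n → Set (Fin n → ℝ)) (x : Fin n → ℝ) :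
    Submodule ℤ (Fin n → ℤ) :=
  Submodule.span ℤ (Set.range fun j => u (Fv x j))

/-- The character value `χ_γ(m_v^F) = exp(2πi ⟨m_v^F, γ̃⟩)` for
`γ ∈ G(σ_v) = ℤ^n / U(σ_v)`, computed using a representative `γ̃` of `γ`. -/
noncomputable def chi {n : ℕ} (u : Set (Fin n → ℝ) → (Fin n → ℤ))
    (Fv : (Fin n → ℝ) → Fin n → Set (Fin n → ℝ))
    (m : (Fin n → ℝ) → Fin n → (Fin n → ℝ)) (x : Fin n → ℝ)
    (γ : (Fin n → ℤ) ⧸ normalLattice u Fv x) (j : Fin n) : ℂ :=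
  Complex.exp (2 * Real.pi * Complex.I *
    ∑ i, (m x j i : ℂ) * ((Quotient.out γ) i : ℂ))

open Matrix Filter Topology

/-! ### Simple polyhedra given by inequalities -/

/-- The affine function `x ↦ ⟨x, U F⟩ + l F` cutting out the facet `F`. -/
def slack {n : ℕ} {ι : Type*} (U : ι → Fin n → ℝ) (l : ι → ℝ) (F : ι) (x : Fin n → ℝ) : ℝ :=
  x ⬝ᵥ U F + l F

/-- The polyhedron on which all the slacks are nonnegative. -/
def poly {n : ℕ} {ι : Type*} (U : ι → Fin n → ℝ) (l : ι → ℝ) : Set (Fin n → ℝ) :=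
  {x | ∀ F, 0 ≤ slack U l F x}

/-- The facets whose slack vanishes at `x`. -/
def act {n : ℕ} {ι : Type*} [Fintype ι] (U : ι → Fin n → ℝ) (l : ι → ℝ) (x : Fin n → ℝ) :
    Finset ι := Finset.univ.filter fun F => slack U l F x = 0

/-- The face of the polyhedron cut out by the facets in `T`. -/
def faceOf {n : ℕ} {ι : Type*} (U : ι → Fin n → ℝ) (l : ι → ℝ) (T : Finset ι) :
    Set (Fin n → ℝ) := {x | x ∈ poly U l ∧ ∀ F ∈ T, slack U l F x = 0}

/-- A bounded simple polyhedron `poly U l` with vertex set `V`: a point is a vertex iff its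
active normals span, each vertex `v` has exactly `n` active facets, and `m v` is the basis dual
to the active normals at `v`. -/
structure SimpData {n : ℕ} {ι : Type*} [Fintype ι] (U : ι → Fin n → ℝ) (l : ι → ℝ)
    (V : Finset (Fin n → ℝ)) (m : (Fin n → ℝ) → ι → (Fin n → ℝ)) : Prop where
  bdd : Bornology.IsBounded (poly U l)
  mem_V : ∀ x, x ∈ V ↔ x ∈ poly U l ∧
    ∀ d : Fin n → ℝ, (∀ F, slack U l F x = 0 → d ⬝ᵥ U F = 0) → d = 0
  card : ∀ v ∈ V, (act U l v).card = n
  dual : ∀ v ∈ V, ∀ F ∈ act U l v, ∀ F' ∈ act U l v,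
    m v F ⬝ᵥ U F' = if F = F' then 1 else 0

section poly
variable {n : ℕ} {ι : Type*} [Fintype ι] {U : ι → Fin n → ℝ} {l : ι → ℝ}
  {V : Finset (Fin n → ℝ)} {m : (Fin n → ℝ) → ι → (Fin n → ℝ)}

lemma mem_act {x : Fin n → ℝ} {F : ι} : F ∈ act U l x ↔ slack U l F x = 0 := by
  simp [act]

omit [Fintype ι] in
lemma slack_add_smul (F : ι) (x d : Fin n → ℝ) (t : ℝ) :
    slack U l F (x + t • d) = slack U l F x + t * (d ⬝ᵥ U F) := by
  simp only [slack, add_dotProduct, smul_dotProduct, smul_eq_mul]; ring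

omit [Fintype ι] in
lemma slack_sub (F : ι) (x y : Fin n → ℝ) :
    (x - y) ⬝ᵥ U F = slack U l F x - slack U l F y := by
  simp only [slack, sub_dotProduct]; ring

/-- A direction which is nonnegative on the active normals stays inside the polyhedron for a
short time. -/
lemma eventually_step {x : Fin n → ℝ} (hx : x ∈ poly U l) (d : Fin n → ℝ)
    (hd : ∀ F, slack U l F x = 0 → 0 ≤ d ⬝ᵥ U F) :
    ∀ᶠ t in 𝓝[>] (0 : ℝ), x + t • d ∈ poly U l := by
  refine eventually_all.2 fun F => ?_
  rcases (hx F).eq_or_lt with h | h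
  · filter_upwards [self_mem_nhdsWithin] with t ht
    rw [slack_add_smul, ← h, zero_add]
    exact mul_nonneg (le_of_lt ht) (hd F h.symm)
  · have hc : ContinuousAt (fun t : ℝ => slack U l F (x + t • d)) 0 := by
      simp only [slack_add_smul]; fun_prop
    have : ∀ᶠ t in 𝓝 (0 : ℝ), 0 < slack U l F (x + t • d) :=
      hc.eventually (lt_mem_nhds (by simpa using h))
    exact (this.filter_mono nhdsWithin_le_nhds).mono fun t ht => ht.le

lemma exists_step {x : Fin n → ℝ} (hx : x ∈ poly U l) (d : Fin n → ℝ)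
    (hd : ∀ F, slack U l F x = 0 → 0 ≤ d ⬝ᵥ U F) :
    ∃ t : ℝ, 0 < t ∧ x + t • d ∈ poly U l := by
  obtain ⟨t, h1, h2⟩ := ((eventually_step hx d hd).and self_mem_nhdsWithin).exists
  exact ⟨t, h2, h1⟩

omit [Fintype ι] in
lemma continuous_slack (F : ι) : Continuous (slack U l F) := by
  unfold slack; fun_prop

omit [Fintype ι] in
lemma isClosed_poly : IsClosed (poly U l) := by
  have : poly U l = ⋂ F, {x | 0 ≤ slack U l F x} := by ext; simp [poly]
  rw [this]
  exact isClosed_iInter fun F => isClosed_le continuous_const (continuous_slack F)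

omit [Fintype ι] in
lemma isClosed_faceOf (T : Finset ι) : IsClosed (faceOf U l T) := by
  have : faceOf U l T = poly U l ∩ ⋂ F ∈ T, {x | slack U l F x = 0} := by
    ext; simp [faceOf]
  rw [this]
  exact isClosed_poly.inter (isClosed_biInter fun F _ =>
    isClosed_eq (continuous_slack F) continuous_const)

namespace SimpData
variable (D : SimpData U l V m)
include D

lemma isCompact_faceOf (T : Finset ι) : IsCompact (faceOf U l T) :=
  Metric.isCompact_of_isClosed_isBounded (isClosed_faceOf T) (D.bdd.subset fun _ h => h.1)

lemma mem_poly {v : Fin n → ℝ} (hv : v ∈ V) : v ∈ poly U l := ((D.mem_V v).1 hv).1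

/-- A linear functional attains its minimum over a nonempty face at a vertex, namely at an
extreme point of the set of minimizers. -/
lemma exists_min_vertex (T : Finset ι) (hT : (faceOf U l T).Nonempty) (ξ : Fin n → ℝ) :
    ∃ v ∈ V, v ∈ faceOf U l T ∧ ∀ p ∈ faceOf U l T, v ⬝ᵥ ξ ≤ p ⬝ᵥ ξ := by
  have hξ : Continuous fun x : Fin n → ℝ => x ⬝ᵥ ξ := by fun_prop
  obtain ⟨x₀, hx₀, hmin⟩ := (D.isCompact_faceOf T).exists_isMinOn hT hξ.continuousOn
  set K := faceOf U l T ∩ {x | x ⬝ᵥ ξ ≤ x₀ ⬝ᵥ ξ} with hK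
  have hKc : IsCompact K :=
    (D.isCompact_faceOf T).inter_right (isClosed_le hξ continuous_const)
  obtain ⟨v, hv⟩ := hKc.extremePoints_nonempty ⟨x₀, hx₀, le_refl (x₀ ⬝ᵥ ξ)⟩
  have hvK : v ∈ K := hv.1
  refine ⟨v, (D.mem_V v).2 ⟨hvK.1.1, fun d hd => ?_⟩, hvK.1,
    fun p hp => hvK.2.trans (hmin hp)⟩
  have h1 := eventually_step hvK.1.1 d fun F hF => (hd F hF).ge
  have h2 := eventually_step hvK.1.1 (-d) fun F hF => by simp [hd F hF]
  obtain ⟨t, ⟨ht1, ht2⟩, ht⟩ := ((h1.and h2).and self_mem_nhdsWithin).exists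
  have ht : 0 < t := ht
  have hf1 : v + t • d ∈ faceOf U l T := ⟨ht1, fun F hF => by
    rw [slack_add_smul, hvK.1.2 F hF, hd F (hvK.1.2 F hF)]; simp⟩
  have hf2 : v + t • -d ∈ faceOf U l T := ⟨ht2, fun F hF => by
    rw [slack_add_smul, hvK.1.2 F hF]; simp [hd F (hvK.1.2 F hF)]⟩
  have g1 : x₀ ⬝ᵥ ξ ≤ (v + t • d) ⬝ᵥ ξ := hmin hf1
  have g2 : x₀ ⬝ᵥ ξ ≤ (v + t • -d) ⬝ᵥ ξ := hmin hf2
  have g3 : v ⬝ᵥ ξ ≤ x₀ ⬝ᵥ ξ := hvK.2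
  have e1 : (v + t • d) ⬝ᵥ ξ = v ⬝ᵥ ξ + t * (d ⬝ᵥ ξ) := by simp [add_dotProduct]
  have e2 : (v + t • -d) ⬝ᵥ ξ = v ⬝ᵥ ξ - t * (d ⬝ᵥ ξ) := by
    simp [add_dotProduct, neg_dotProduct, sub_eq_add_neg]
  have k1 : v + t • d ∈ K := ⟨hf1, by simp only [Set.mem_ofPred_eq]; linarith⟩
  have k2 : v + t • -d ∈ K := ⟨hf2, by simp only [Set.mem_ofPred_eq]; linarith⟩
  have hseg : v ∈ openSegment ℝ (v + t • d) (v + t • -d) :=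
    ⟨1 / 2, 1 / 2, by norm_num, by norm_num, by norm_num, by
      ext i; simp; ring⟩
  have := hv.2 k1 k2 hseg
  have h0 : t • d = 0 := by simpa using this
  exact (smul_eq_zero.1 h0).resolve_left ht.ne'

/-- Expansion of a point in the dual basis at a vertex. -/
lemma expand {v : Fin n → ℝ} (hv : v ∈ V) (p : Fin n → ℝ) :
    p - v = ∑ F ∈ act U l v, slack U l F p • m v F := by
  rw [← sub_eq_zero]
  refine ((D.mem_V v).1 hv).2 _ fun F hF => ?_
  rw [sub_dotProduct, slack_sub (l := l), hF, sum_dotProduct]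
  have hF' : F ∈ act U l v := mem_act.2 hF
  rw [Finset.sum_congr rfl (g := fun G => if G = F then slack U l F p else 0)]
  · simp [hF']
  · intro G hG
    rw [smul_dotProduct, D.dual v hv G hG F hF']
    split_ifs with h <;> simp [h]

lemma expand_dot {v : Fin n → ℝ} (hv : v ∈ V) (p ξ : Fin n → ℝ) :
    p ⬝ᵥ ξ - v ⬝ᵥ ξ = ∑ F ∈ act U l v, slack U l F p * (m v F ⬝ᵥ ξ) := by
  rw [← sub_dotProduct, D.expand hv, sum_dotProduct]
  simp

/-- The edge at `v` leaving the facet `F` stays in all other facets through `v`. -/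
lemma exists_edge {v : Fin n → ℝ} (hv : v ∈ V) {F : ι} (hF : F ∈ act U l v) :
    ∃ t : ℝ, 0 < t ∧ v + t • m v F ∈ poly U l ∧ slack U l F (v + t • m v F) = t ∧
      ∀ G ∈ act U l v, G ≠ F → slack U l G (v + t • m v F) = 0 := by
  obtain ⟨t, ht, h⟩ := exists_step (D.mem_poly hv) (m v F) fun G hG => by
    rw [D.dual v hv F hF G (mem_act.2 hG)]; split_ifs <;> simp
  refine ⟨t, ht, h, ?_, fun G hG hne => ?_⟩
  · rw [slack_add_smul, mem_act.1 hF, D.dual v hv F hF F hF]; simp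
  · rw [slack_add_smul, mem_act.1 hG, D.dual v hv F hF G hG]; simp [hne.symm]

lemma mem_faceOf_iff {v : Fin n → ℝ} (hv : v ∈ V) (T : Finset ι) :
    v ∈ faceOf U l T ↔ T ⊆ act U l v :=
  ⟨fun h F hF => mem_act.2 (h.2 F hF), fun h => ⟨D.mem_poly hv, fun _ hF => mem_act.1 (h hF)⟩⟩

/-- For generic `ξ`, every nonempty face has exactly one vertex at which all edges of the face
are `ξ`-increasing. -/
lemma existsUnique_min (T : Finset ι) (hT : (faceOf U l T).Nonempty) (ξ : Fin n → ℝ)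
    (hξ : ∀ v ∈ V, ∀ F ∈ act U l v, m v F ⬝ᵥ ξ ≠ 0) :
    ∃ v ∈ V, (T ⊆ act U l v ∧ ∀ F ∈ act U l v \ T, 0 < m v F ⬝ᵥ ξ) ∧
      ∀ w ∈ V, (T ⊆ act U l w ∧ ∀ F ∈ act U l w \ T, 0 < m w F ⬝ᵥ ξ) → w = v := by
  have key : ∀ w ∈ V, (T ⊆ act U l w ∧ ∀ F ∈ act U l w \ T, 0 < m w F ⬝ᵥ ξ) →
      ∀ p ∈ faceOf U l T, p ⬝ᵥ ξ ≤ w ⬝ᵥ ξ → p = w := by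
    intro w hw ⟨h1, h2⟩ p hp hle
    have hnn : ∀ F ∈ act U l w, 0 ≤ slack U l F p * (m w F ⬝ᵥ ξ) := fun F hF => by
      by_cases hFT : F ∈ T
      · rw [hp.2 F hFT, zero_mul]
      · exact mul_nonneg (hp.1 F) (h2 F (by simp [hF, hFT])).le
    have h0 : ∑ F ∈ act U l w, slack U l F p * (m w F ⬝ᵥ ξ) = 0 :=
      le_antisymm (by rw [← D.expand_dot hw]; linarith) (Finset.sum_nonneg hnn)
    rw [Finset.sum_eq_zero_iff_of_nonneg hnn] at h0
    rw [← sub_eq_zero, D.expand hw]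
    refine Finset.sum_eq_zero fun F hF => ?_
    rw [(mul_eq_zero.1 (h0 F hF)).resolve_right (hξ w hw F hF), zero_smul]
  obtain ⟨v, hv, hvT, hmin⟩ := D.exists_min_vertex T hT ξ
  refine ⟨v, hv, ⟨(D.mem_faceOf_iff hv T).1 hvT, fun F hF => ?_⟩, fun w hw h => ?_⟩
  · rw [Finset.mem_sdiff] at hF
    obtain ⟨t, ht, h1, -, h2⟩ := D.exists_edge hv hF.1
    have := hmin _ ⟨h1, fun G hG => h2 G ((D.mem_faceOf_iff hv T).1 hvT hG)
      (fun h => hF.2 (h ▸ hG))⟩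
    simp only [add_dotProduct, smul_dotProduct, smul_eq_mul, le_add_iff_nonneg_right] at this
    exact lt_of_le_of_ne (nonneg_of_mul_nonneg_right this ht) (hξ v hv F hF.1).symm
  · exact (key w hw h v hvT (hmin w ((D.mem_faceOf_iff hw T).2 h.1))).symm

/-- Flipping the `ξ`-increasing factors at each vertex gives a sum which does not depend on the
generic vector `ξ`: expanding the products, the terms correspond to the nonempty faces, each
contributing at its unique `ξ`-minimal vertex. -/
lemma sum_flip (α : ι → ℂ) (c : ℂ) (ξ : Fin n → ℝ)
    (hξ : ∀ v ∈ V, ∀ F ∈ act U l v, m v F ⬝ᵥ ξ ≠ 0) :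
    ∑ v ∈ V, ∏ F ∈ act U l v, (α F - if 0 < m v F ⬝ᵥ ξ then c else 0) =
      ∑ T : Finset ι, if (faceOf U l T).Nonempty then
        (∏ F ∈ T, α F) * (-c) ^ (n - T.card) else 0 := by
  have h1 : ∀ v ∈ V, ∏ F ∈ act U l v, (α F - if 0 < m v F ⬝ᵥ ξ then c else 0) =
      ∑ T : Finset ι, if T ⊆ act U l v ∧ ∀ F ∈ act U l v \ T, 0 < m v F ⬝ᵥ ξ then
        (∏ F ∈ T, α F) * (-c) ^ (n - T.card) else 0 := by
    intro v hv
    have e : ∀ F, (α F - if 0 < m v F ⬝ᵥ ξ then c else 0) =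
      α F + if 0 < m v F ⬝ᵥ ξ then -c else 0 := fun F => by split_ifs <;> ring
    simp only [e, Finset.prod_add]
    rw [← Finset.sum_subset (Finset.subset_univ (act U l v).powerset)]
    · refine Finset.sum_congr rfl fun T hT => ?_
      rw [Finset.mem_powerset] at hT
      rw [Finset.prod_ite_zero]
      simp only [hT, true_and]
      split_ifs with h
      · rw [Finset.prod_const, Finset.card_sdiff_of_subset hT, D.card v hv]
      · simp
    · intro T _ hT
      rw [Finset.mem_powerset] at hT
      simp [hT]
  rw [Finset.sum_congr rfl h1, Finset.sum_comm]
  refine Finset.sum_congr rfl fun T _ => ?_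
  split_ifs with hT
  · obtain ⟨v, hv, h, huniq⟩ := D.existsUnique_min T hT ξ hξ
    rw [Finset.sum_eq_single v]
    · rw [if_pos h]
    · intro w hw hne
      rw [if_neg fun h' => hne (huniq w hw h')]
    · exact fun h' => absurd hv h'
  · refine Finset.sum_eq_zero fun v hv => if_neg fun h => hT ⟨v, ?_⟩
    exact (D.mem_faceOf_iff hv T).2 h.1

/-- A vector off finitely many hyperplanes. -/
lemma exists_generic : ∃ ζ : Fin n → ℝ, ∀ v ∈ V, ∀ F ∈ act U l v, m v F ⬝ᵥ ζ ≠ 0 := by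
  let I : Finset ((Fin n → ℝ) × ι) := (V ×ˢ Finset.univ).filter fun q => q.2 ∈ act U l q.1
  let f : (Fin n → ℝ) × ι → Submodule ℝ (Fin n → ℝ) := fun q =>
    LinearMap.ker (dotProductBilin ℝ ℝ (m q.1 q.2))
  have := Subspace.biUnion_ne_univ_of_top_notMem (s := I.image f) (by
    intro h
    obtain ⟨⟨v, F⟩, hq, htop⟩ := Finset.mem_image.1 h
    simp only [I, Finset.mem_filter, Finset.mem_product, Finset.mem_univ, and_true] at hq
    have h1 : U F ∈ f (v, F) := htop ▸ Submodule.mem_top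
    have h2 : m v F ⬝ᵥ U F = 0 := h1
    rw [D.dual v hq.1 F hq.2 F hq.2] at h2
    simp at h2)
  obtain ⟨ζ, hζ⟩ := (Set.ne_univ_iff_exists_notMem _).1 this
  refine ⟨ζ, fun v hv F hF h => hζ ?_⟩
  simp only [Set.mem_iUnion]
  exact ⟨f (v, F), Finset.mem_coe.2 (Finset.mem_image.2 ⟨(v, F), by simp [I, hv, hF], rfl⟩), h⟩

omit D in
lemma eventually_ne_zero (a b : ℝ) (hb : b ≠ 0) : ∀ᶠ t in 𝓝[>] (0 : ℝ), a + t * b ≠ 0 := by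
  by_cases ha : a = 0
  · filter_upwards [self_mem_nhdsWithin] with t ht
    simpa [ha, hb] using (ne_of_gt ht : t ≠ 0)
  · have hc : ContinuousAt (fun t : ℝ => a + t * b) 0 := by fun_prop
    exact nhdsWithin_le_nhds (hc.eventually_ne (by simpa using ha))

omit D in
lemma eventually_neg (a b : ℝ) (ha : a < 0) : ∀ᶠ t in 𝓝[>] (0 : ℝ), a + t * b < 0 := by
  have hc : ContinuousAt (fun t : ℝ => a + t * b) 0 := by fun_prop
  exact nhdsWithin_le_nhds (hc.eventually (gt_mem_nhds (by simpa using ha)))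

/-- Perturbing `ξ₀` to a generic vector while keeping finitely many strict inequalities. -/
lemma exists_generic_near (ξ₀ : Fin n → ℝ) (I : Finset (Fin n → ℝ))
    (hI : ∀ w ∈ I, w ⬝ᵥ ξ₀ < 0) :
    ∃ ξ : Fin n → ℝ, (∀ v ∈ V, ∀ F ∈ act U l v, m v F ⬝ᵥ ξ ≠ 0) ∧ ∀ w ∈ I, w ⬝ᵥ ξ < 0 := by
  obtain ⟨ζ, hζ⟩ := D.exists_generic
  have h1 : ∀ᶠ t in 𝓝[>] (0 : ℝ), ∀ v ∈ V, ∀ F ∈ act U l v,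
      m v F ⬝ᵥ ξ₀ + t * (m v F ⬝ᵥ ζ) ≠ 0 :=
    (Finset.eventually_all V).2 fun v hv => (Finset.eventually_all _).2 fun F hF =>
      eventually_ne_zero _ _ (hζ v hv F hF)
  have h2 : ∀ᶠ t in 𝓝[>] (0 : ℝ), ∀ w ∈ I, w ⬝ᵥ ξ₀ + t * (w ⬝ᵥ ζ) < 0 :=
    (Finset.eventually_all I).2 fun w hw => eventually_neg _ _ (hI w hw)
  obtain ⟨t, g1, g2⟩ := (h1.and h2).exists
  refine ⟨ξ₀ + t • ζ, fun v hv F hF => ?_, fun w hw => ?_⟩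
  · simpa [dotProduct_add] using g1 v hv F hF
  · simpa [dotProduct_add] using g2 w hw

end SimpData

/-! ### The weighted Lawrence–Varchenko decomposition -/

/-- The coefficient of `t ^ s` in the expansion of `(y + 1) / (1 - t) - y` at `t = 0`. -/
def wt (y : ℂ) (s : ℝ) : ℂ := (if 0 ≤ s then y + 1 else 0) - if s = 0 then y else 0

/-- If a flipped product at `v` does not vanish at `x`, then `x` lies in the flipped cone
at `v`, on which `ξ` is bounded above by its value at `v`. -/
lemma SimpData.le_of_prod_ne_zero (D : SimpData U l V m) (y : ℂ) (x ξ : Fin n → ℝ)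
    {v : Fin n → ℝ} (hv : v ∈ V)
    (h : ∏ F ∈ act U l v, (wt y (slack U l F x) - if 0 < m v F ⬝ᵥ ξ then y + 1 else 0) ≠ 0) :
    (∀ F ∈ act U l v, 0 < m v F ⬝ᵥ ξ → slack U l F x ≤ 0) ∧ x ⬝ᵥ ξ ≤ v ⬝ᵥ ξ := by
  rw [Finset.prod_ne_zero_iff] at h
  have h1 : ∀ F ∈ act U l v, 0 < m v F ⬝ᵥ ξ → slack U l F x ≤ 0 := by
    intro F hF hpos
    by_contra! hs
    refine h F hF ?_
    simp [wt, hpos, hs.le, hs.ne']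
  refine ⟨h1, ?_⟩
  have : ∑ F ∈ act U l v, slack U l F x * (m v F ⬝ᵥ ξ) ≤ 0 := by
    refine Finset.sum_nonpos fun F hF => ?_
    by_cases hpos : 0 < m v F ⬝ᵥ ξ
    · exact mul_nonpos_of_nonpos_of_nonneg (h1 F hF hpos) hpos.le
    · refine mul_nonpos_of_nonneg_of_nonpos ?_ (not_lt.1 hpos)
      by_contra! hs
      refine h F hF ?_
      simp [wt, hpos, hs.not_ge, hs.ne]
  rw [← D.expand_dot hv] at this
  linarith

/-- The weighted Lawrence–Varchenko decomposition: the flipped vertex cones of a simple polytope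
add up to the indicator of the polytope weighted by `(y + 1) ^ (n - #facets through x)`. -/
lemma SimpData.sum_wt (D : SimpData U l V m) (y : ℂ) (x ξ : Fin n → ℝ)
    (hξ : ∀ v ∈ V, ∀ F ∈ act U l v, m v F ⬝ᵥ ξ ≠ 0) :
    ∑ v ∈ V, ∏ F ∈ act U l v, (wt y (slack U l F x) - if 0 < m v F ⬝ᵥ ξ then y + 1 else 0) =
      if x ∈ poly U l then (y + 1) ^ (n - (act U l x).card) else 0 := by
  -- the left-hand side does not depend on `ξ`, so `ξ` may be chosen to suit `x`
  rw [D.sum_flip _ _ ξ hξ]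
  split_ifs with hx
  · have hxT : x ∈ faceOf U l (act U l x) := ⟨hx, fun F hF => mem_act.1 hF⟩
    -- `ξ` is a perturbation of minus the sum of the normals active at `x`
    obtain ⟨ξ, hξ, hI⟩ := D.exists_generic_near (-∑ F ∈ act U l x, U F)
      (((V.filter fun v => ¬ act U l x ⊆ act U l v).image fun v => v - x) ∪
        ((V.filter fun v => act U l x ⊆ act U l v) ×ˢ act U l x).image fun q => m q.1 q.2) (by
      intro w hw
      rw [Finset.mem_union, Finset.mem_image, Finset.mem_image] at hw
      rw [dotProduct_neg, neg_lt_zero, dotProduct_sum]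
      rcases hw with ⟨v, hv, rfl⟩ | ⟨⟨v, F⟩, hv, rfl⟩
      · rw [Finset.mem_filter, Finset.not_subset] at hv
        obtain ⟨hv, F, hF, hFv⟩ := hv
        have e : ∀ F ∈ act U l x, (v - x) ⬝ᵥ U F = slack U l F v := fun F hF => by
          rw [slack_sub (l := l), mem_act.1 hF, sub_zero]
        rw [Finset.sum_congr rfl e]
        refine Finset.sum_pos' (fun F _ => D.mem_poly hv F) ⟨F, hF, ?_⟩
        exact lt_of_le_of_ne (D.mem_poly hv F) fun h => hFv (mem_act.2 h.symm)
      · simp only [Finset.mem_product, Finset.mem_filter] at hv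
        obtain ⟨⟨hv, hsub⟩, hF⟩ := hv
        rw [Finset.sum_congr rfl fun G hG => D.dual v hv F (hsub hF) G (hsub hG)]
        simp [hF])
    rw [← D.sum_flip _ _ ξ hξ]
    have hI1 : ∀ v ∈ V, ¬ act U l x ⊆ act U l v → v ⬝ᵥ ξ < x ⬝ᵥ ξ := fun v hv h => by
      have := hI (v - x) (Finset.mem_union_left _ (Finset.mem_image.2 ⟨v, by simp [hv, h], rfl⟩))
      rw [sub_dotProduct] at this
      linarith
    have hI2 : ∀ v ∈ V, act U l x ⊆ act U l v → ∀ F ∈ act U l x, m v F ⬝ᵥ ξ < 0 :=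
      fun v hv h F hF => hI _ (Finset.mem_union_right _
        (Finset.mem_image.2 ⟨(v, F), by simp [hv, h, hF], rfl⟩))
    obtain ⟨v, hv, ⟨hv1, hv2⟩, huniq⟩ := D.existsUnique_min (act U l x) ⟨x, hxT⟩ (-ξ)
      fun v hv F hF => by simpa using hξ v hv F hF
    simp only [dotProduct_neg, Left.neg_pos_iff] at hv2 huniq
    rw [Finset.sum_eq_single v]
    · have e : ∀ F ∈ act U l v,
          (wt y (slack U l F x) - if 0 < m v F ⬝ᵥ ξ then y + 1 else 0) =
            if F ∈ act U l x then 1 else y + 1 := by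
        intro F hF
        by_cases hFx : F ∈ act U l x
        · have := hI2 v hv hv1 F hFx
          simp [wt, hFx, mem_act.1 hFx, this.not_gt]
        · have := hv2 F (by simp [hF, hFx])
          have h2 : slack U l F x ≠ 0 := fun h => hFx (mem_act.2 h)
          simp [wt, hFx, this.not_gt, h2, hx F]
      rw [Finset.prod_congr rfl e, Finset.prod_ite, Finset.prod_const_one, one_mul,
        Finset.prod_const, ← Finset.sdiff_eq_filter, Finset.card_sdiff_of_subset hv1,
        D.card v hv]
    · intro w hw hne
      by_contra hprod
      obtain ⟨h1, h2⟩ := D.le_of_prod_ne_zero y x ξ hw hprod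
      have hsub : act U l x ⊆ act U l w := by
        by_contra h
        exact absurd h2 (not_le.2 (hI1 w hw h))
      refine hne (huniq w hw ⟨hsub, fun F hF => ?_⟩)
      rw [Finset.mem_sdiff] at hF
      refine lt_of_le_of_ne (not_lt.1 fun hpos => hF.2 ?_) (hξ w hw F hF.1)
      exact mem_act.2 (le_antisymm (h1 F hF.1 hpos) (hx F))
    · exact fun h => absurd hv h
  -- for `x` outside `P`, `ξ` is a perturbation of minus a normal violated at `x`
  · obtain ⟨F, hF⟩ : ∃ F, slack U l F x < 0 := by simpa [poly] using hx
    obtain ⟨ξ, hξ, hI⟩ := D.exists_generic_near (-U F) (V.image fun v => v - x) (by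
      intro w hw
      obtain ⟨v, hv, rfl⟩ := Finset.mem_image.1 hw
      rw [dotProduct_neg, slack_sub (l := l)]
      have := D.mem_poly hv F
      linarith)
    rw [← D.sum_flip _ _ ξ hξ]
    refine Finset.sum_eq_zero fun v hv => ?_
    by_contra hprod
    have h2 := (D.le_of_prod_ne_zero y x ξ hv hprod).2
    have := hI (v - x) (Finset.mem_image.2 ⟨v, hv, rfl⟩)
    rw [sub_dotProduct] at this
    linarith

end poly

/-! ### Laurent expansion of the vertex terms -/

lemma hasSum_of_eq {κ : Type*} {f g : κ → ℂ} {a b : ℂ} (h : HasSum f a) (hfg : ∀ k, g k = f k)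
    (hab : b = a) : HasSum g b := by
  rw [hab, show g = f from funext hfg]
  exact h

/-- The Laurent expansion of `(y + 1) / (1 - t) - y` in the region containing `t`. -/
lemma hasSum_wt (y t : ℂ) (ht0 : t ≠ 0) (ht : ‖t‖ ≠ 1) :
    HasSum (fun k : ℤ => (wt y k - if 1 < ‖t‖ then y + 1 else 0) * t ^ k)
      ((y + 1) / (1 - t) - y) := by
  have hy : HasSum (fun k : ℤ => if k = 0 then y else 0) y := hasSum_ite_eq 0 y
  rcases lt_or_gt_of_ne ht with h | h
  · have hg : HasSum (fun k : ℤ => if 0 ≤ k then (y + 1) * t ^ k else 0) ((y + 1) / (1 - t)) := by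
      rw [← Function.Injective.hasSum_iff Nat.cast_injective (f := fun k : ℤ => _)]
      · simpa [Function.comp_def, div_eq_mul_inv] using
          (hasSum_geometric_of_norm_lt_one h).mul_left (y + 1)
      · intro k hk
        rw [if_neg fun h0 => hk ⟨k.toNat, Int.toNat_of_nonneg h0⟩]
    refine hasSum_of_eq (hg.sub hy) (fun k => ?_) rfl
    by_cases hk : k = 0
    · simp [hk, wt, h.not_gt]
    · by_cases hk' : 0 ≤ k <;> simp [hk, hk', wt, h.not_gt]
  · have h' : ‖t⁻¹‖ < 1 := by rw [norm_inv]; exact inv_lt_one_of_one_lt₀ h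
    have hne : t ≠ 1 := fun e => ht (by simp [e])
    have hg : HasSum (fun k : ℤ => if k < 0 then -(y + 1) * t ^ k else 0)
        ((y + 1) / (1 - t)) := by
      rw [← Function.Injective.hasSum_iff (g := fun j : ℕ => -((j : ℤ) + 1))
        (fun a b hab => by simpa using hab)]
      · have := (hasSum_geometric_of_norm_lt_one h').mul_left (-(y + 1) * t⁻¹)
        refine hasSum_of_eq this (fun j => ?_) ?_
        · have : -((j : ℤ) + 1) < 0 := by omega
          simp only [Function.comp_apply, this, if_true]
          rw [mul_assoc, _root_.zpow_neg, zpow_add₀ ht0, mul_inv]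
          simp [mul_comm]
        · have h1 : 1 - t ≠ 0 := sub_ne_zero.2 hne.symm
          have h2 : 1 - t⁻¹ ≠ 0 := sub_ne_zero.2 fun e => hne (by simpa using e.symm)
          have h3 : t - 1 ≠ 0 := sub_ne_zero.2 hne
          field_simp
          ring
      · intro k hk
        rw [if_neg fun h0 => hk ⟨(-k - 1).toNat, by simp only; omega⟩]
    refine hasSum_of_eq (hg.sub hy) (fun k => ?_) rfl
    by_cases hk : k = 0
    · simp [hk, wt, h]
    · by_cases hk' : 0 ≤ k
      · simp [hk, hk', wt, h, hk'.not_gt]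
      · simp [hk, hk', wt, h, not_le.1 hk']

lemma hasSum_mul {κ κ' : Type*} {f : κ → ℂ} {g : κ' → ℂ} {a b : ℂ} (hf : HasSum f a)
    (hg : HasSum g b) : HasSum (fun q : κ × κ' => f q.1 * g q.2) (a * b) := by
  have h1 : Summable fun k => ‖f k‖ := hf.summable.norm
  have h2 : Summable fun k => ‖g k‖ := hg.summable.norm
  exact hf.mul hg (summable_mul_of_summable_norm h1 h2)

lemma hasSum_pi_prod {n : ℕ} (f : Fin n → ℤ → ℂ) (a : Fin n → ℂ) (h : ∀ j, HasSum (f j) (a j)) :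
    HasSum (fun k : Fin n → ℤ => ∏ j, f j (k j)) (∏ j, a j) := by
  induction n with
  | zero => exact hasSum_unique (fun k : Fin 0 → ℤ => ∏ j, f j (k j))
  | succ n ih =>
    have h1 := ih (fun j => f j.succ) (fun j => a j.succ) fun j => h j.succ
    have h2 := hasSum_mul (h 0) h1
    rw [← (Fin.consEquiv fun _ : Fin (n + 1) => ℤ).hasSum_iff, Fin.prod_univ_succ]
    refine hasSum_of_eq h2 (fun q => ?_) rfl
    simp [Fin.prod_univ_succ, Fin.consEquiv]

lemma cpair_add {n : ℕ} (a b : Fin n → ℝ) (z : Fin n → ℂ) :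
    cpair (a + b) z = cpair a z + cpair b z := by
  simp [cpair, add_mul, Finset.sum_add_distrib]

lemma cpair_sum_smul {n : ℕ} (k : Fin n → ℤ) (M : Fin n → Fin n → ℝ) (z : Fin n → ℂ) :
    cpair (∑ j, (k j : ℝ) • M j) z = ∑ j, (k j : ℂ) * cpair (M j) z := by
  simp only [cpair, Finset.mul_sum, Finset.sum_apply, Pi.smul_apply, smul_eq_mul]
  push_cast
  simp only [Finset.sum_mul]
  rw [Finset.sum_comm]
  simp only [mul_assoc]

lemma cpair_re {n : ℕ} (a : Fin n → ℝ) (z : Fin n → ℂ) :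
    (cpair a z).re = a ⬝ᵥ fun i => (z i).re := by
  simp [cpair, dotProduct]

/-- Orthogonality of characters on `ℤ^n / L`: a vector `a` in the dual of `L` defines a character
whose sum over the quotient detects whether `a` is integral. -/
lemma sum_char {n : ℕ} (L : Submodule ℤ (Fin n → ℤ)) [Fintype ((Fin n → ℤ) ⧸ L)]
    (a : Fin n → ℝ) (ha : ∀ g ∈ L, ∃ k : ℤ, a ⬝ᵥ intVec g = k) :
    ∑ γ : (Fin n → ℤ) ⧸ L, Complex.exp (2 * Real.pi * Complex.I *
        cpair a fun i => ((Quotient.out γ) i : ℂ)) =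
      if a ∈ Set.range intVec then (Nat.card ((Fin n → ℤ) ⧸ L) : ℂ) else 0 := by
  set e : (Fin n → ℤ) → ℂ := fun g => Complex.exp (2 * Real.pi * Complex.I *
    cpair a fun i => (g i : ℂ)) with he
  have hadd : ∀ g h, e (g + h) = e g * e h := fun g h => by
    simp only [he, ← Complex.exp_add, cpair, Pi.add_apply, Int.cast_add,
      mul_add, Finset.sum_add_distrib]
  have hlat : ∀ g, (∃ k : ℤ, a ⬝ᵥ intVec g = k) → e g = 1 := fun g ⟨k, hk⟩ => by
    have : cpair a (fun i => (g i : ℂ)) = k := by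
      have := congrArg (fun r : ℝ => (r : ℂ)) hk
      simpa [dotProduct, intVec, cpair] using this
    simp only [he, this]
    rw [mul_comm]
    exact Complex.exp_int_mul_two_pi_mul_I k
  have hout : ∀ g, e (Quotient.out (Submodule.Quotient.mk g : (Fin n → ℤ) ⧸ L)) = e g := by
    intro g
    set o := Quotient.out (Submodule.Quotient.mk g : (Fin n → ℤ) ⧸ L)
    have ho : (Submodule.Quotient.mk o : (Fin n → ℤ) ⧸ L) = Submodule.Quotient.mk g :=
      Quotient.out_eq _
    have := (Submodule.Quotient.eq L).1 ho
    have h1 := hadd (o - g) g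
    rw [sub_add_cancel, hlat _ (ha _ this), one_mul] at h1
    exact h1
  change ∑ γ : (Fin n → ℤ) ⧸ L, e (Quotient.out γ) = _
  split_ifs with h
  · obtain ⟨b, rfl⟩ := h
    have h1 : ∀ γ : (Fin n → ℤ) ⧸ L, e (Quotient.out γ) = 1 := fun γ =>
      hlat _ ⟨b ⬝ᵥ Quotient.out γ, by simp [dotProduct, intVec]⟩
    simp [h1]
  -- some coordinate `a i` is not an integer, and translation by `e_i` scales the sum
  · obtain ⟨i, hi⟩ : ∃ i, ∀ k : ℤ, a i ≠ k := by
      by_contra! hc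
      choose b hb using hc
      exact h ⟨b, funext fun i => (hb i).symm⟩
    have hne : e (Pi.single i 1) ≠ 1 := by
      intro h1
      obtain ⟨k, hk⟩ := Complex.exp_eq_one_iff.1 h1
      have h2 : cpair a (fun j => ((Pi.single i 1 : Fin n → ℤ) j : ℂ)) = a i := by
        simp [cpair, Pi.single_apply]
      rw [h2, mul_comm] at hk
      have h3 := mul_right_cancel₀ Complex.two_pi_I_ne_zero hk
      exact hi k (by exact_mod_cast h3)
    have hshift : ∑ γ : (Fin n → ℤ) ⧸ L, e (Quotient.out γ) =
        e (Pi.single i 1) * ∑ γ : (Fin n → ℤ) ⧸ L, e (Quotient.out γ) := by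
      rw [Finset.mul_sum, ← Equiv.sum_comp (Equiv.addLeft
        (Submodule.Quotient.mk (Pi.single i 1) : (Fin n → ℤ) ⧸ L))]
      refine Finset.sum_congr rfl fun γ _ => ?_
      obtain ⟨g, rfl⟩ := Submodule.Quotient.mk_surjective L γ
      change e (Quotient.out (Submodule.Quotient.mk (Pi.single i 1 + g) : (Fin n → ℤ) ⧸ L)) = _
      rw [hout, hout, hadd]
    have h0 : (1 - e (Pi.single i 1)) * ∑ γ : (Fin n → ℤ) ⧸ L, e (Quotient.out γ) = 0 := by
      rw [sub_mul, one_mul, ← hshift, sub_self]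
    exact (mul_eq_zero.1 h0).resolve_left (sub_ne_zero.2 hne.symm)

/-- Expansion in a dual basis. -/
lemma dual_expand {n : ℕ} (w : Fin n → Fin n → ℝ) (M : Fin n → Fin n → ℝ)
    (hM : ∀ j j', M j ⬝ᵥ w j' = if j = j' then 1 else 0) (d : Fin n → ℝ) :
    ∑ j, (d ⬝ᵥ w j) • M j = d := by
  have h1 : Matrix.of M * (Matrix.of w)ᵀ = 1 := by
    ext j j'
    simpa [Matrix.mul_apply, dotProduct, Matrix.one_apply] using hM j j'
  have h2 := mul_eq_one_comm.1 h1
  have h3 : d ᵥ* ((Matrix.of w)ᵀ * Matrix.of M) = d := by rw [h2, vecMul_one]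
  rw [← vecMul_vecMul] at h3
  conv_rhs => rw [← h3]
  ext i
  simp [vecMul, dotProduct, Finset.sum_apply]

lemma finite_quot {n : ℕ} (w : Fin n → Fin n → ℤ) (M : Fin n → Fin n → ℝ)
    (hM : ∀ j j', M j ⬝ᵥ intVec (w j') = if j = j' then 1 else 0) :
    Finite ((Fin n → ℤ) ⧸ Submodule.span ℤ (Set.range w)) := by
  have hli : LinearIndependent ℤ w := by
    rw [Fintype.linearIndependent_iff]
    intro g hg j
    have h1 : intVec (∑ i, g i • w i) = ∑ i, (g i : ℝ) • intVec (w i) := by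
      ext k; simp [intVec]
    have h2 : M j ⬝ᵥ intVec (∑ i, g i • w i) = 0 := by
      rw [hg]; simp [intVec, dotProduct]
    rw [h1, dotProduct_sum] at h2
    simpa [hM] using h2
  refine Submodule.finiteQuotientOfFreeOfRankEq _ ?_
  rw [finrank_span_eq_card hli]
  simp

/-- When no edge direction is orthogonal to `Re z`, the vertex term is the sum over all lattice
points of the exponentials weighted by the indicator of the flipped vertex cone. -/
lemma hasSum_vertex {n : ℕ} (w : Fin n → Fin n → ℤ) (M : Fin n → Fin n → ℝ)
    (hM : ∀ j j', M j ⬝ᵥ intVec (w j') = if j = j' then 1 else 0) (v : Fin n → ℤ)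
    (y : ℂ) (z : Fin n → ℂ) (hz : ∀ j, M j ⬝ᵥ (fun i => (z i).re) ≠ 0) :
    HasSum (fun p : Fin n → ℤ => Complex.exp (cpair (intVec p) z) *
        ∏ j, (wt y (intVec (p - v) ⬝ᵥ intVec (w j)) -
          if 0 < M j ⬝ᵥ (fun i => (z i).re) then y + 1 else 0))
      (Complex.exp (cpair (intVec v) z) /
          (Nat.card ((Fin n → ℤ) ⧸ Submodule.span ℤ (Set.range w)) : ℂ) *
        ∑ᶠ γ : (Fin n → ℤ) ⧸ Submodule.span ℤ (Set.range w),
          ∏ j, ((y + 1) / (1 - Complex.exp (2 * Real.pi * Complex.I *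
            ∑ i, (M j i : ℂ) * ((Quotient.out γ) i : ℂ)) * Complex.exp (cpair (M j) z)) - y)) := by
  have hfin := finite_quot w M hM
  have := Fintype.ofFinite ((Fin n → ℤ) ⧸ Submodule.span ℤ (Set.range w))
  set L := Submodule.span ℤ (Set.range w) with hL
  rw [finsum_eq_sum_of_fintype]
  set c : (Fin n → ℤ) → ℂ := fun k => ∏ j, (wt y (k j) -
    if 0 < M j ⬝ᵥ (fun i => (z i).re) then y + 1 else 0) with hc
  have h1 : ∀ γ : (Fin n → ℤ) ⧸ L, HasSum (fun k : Fin n → ℤ =>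
      c k * Complex.exp (cpair (∑ j, (k j : ℝ) • M j) z) *
        Complex.exp (2 * Real.pi * Complex.I *
          cpair (∑ j, (k j : ℝ) • M j) fun i => ((Quotient.out γ) i : ℂ)))
      (∏ j, ((y + 1) / (1 - Complex.exp (2 * Real.pi * Complex.I *
            ∑ i, (M j i : ℂ) * ((Quotient.out γ) i : ℂ)) * Complex.exp (cpair (M j) z)) - y)) := by
    intro γ
    set t : Fin n → ℂ := fun j => Complex.exp (2 * Real.pi * Complex.I *
      ∑ i, (M j i : ℂ) * ((Quotient.out γ) i : ℂ)) * Complex.exp (cpair (M j) z) with ht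
    have hnorm : ∀ j, ‖t j‖ = Real.exp (M j ⬝ᵥ fun i => (z i).re) := by
      intro j
      have e : (2 * Real.pi * Complex.I * ∑ i, (M j i : ℂ) * ((Quotient.out γ) i : ℂ)) =
          ((2 * Real.pi * ∑ i, M j i * (Quotient.out γ) i : ℝ) : ℂ) * Complex.I := by
        push_cast; ring
      simp only [ht]
      rw [norm_mul, e, Complex.norm_exp_ofReal_mul_I, Complex.norm_exp, cpair_re, one_mul]
    have hs := hasSum_pi_prod _ _ fun j => hasSum_wt y (t j)
      (by simp [ht]) (by rw [hnorm]; simpa using hz j)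
    refine hasSum_of_eq hs (fun k => ?_) rfl
    rw [Finset.prod_mul_distrib, mul_assoc]
    congr 1
    · simp only [hc, hnorm, Real.one_lt_exp_iff]
    · rw [cpair_sum_smul, cpair_sum_smul, ← Complex.exp_add]
      simp only [ht, ← Complex.exp_add, ← Complex.exp_int_mul, ← Complex.exp_sum]
      congr 1
      rw [Finset.mul_sum, ← Finset.sum_add_distrib]
      refine Finset.sum_congr rfl fun j _ => ?_
      simp only [cpair]
      ring
  have h2 := (hasSum_sum fun γ (_ : γ ∈ Finset.univ) => h1 γ).mul_left
    (Complex.exp (cpair (intVec v) z) / (Nat.card ((Fin n → ℤ) ⧸ L) : ℂ))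
  have hdual : ∀ k : Fin n → ℤ, ∀ g ∈ L, ∃ a : ℤ, (∑ j, (k j : ℝ) • M j) ⬝ᵥ intVec g = a := by
    intro k g hg
    induction hg using Submodule.span_induction with
    | mem x hx =>
      obtain ⟨j, rfl⟩ := hx
      exact ⟨k j, by rw [sum_dotProduct]; simp [hM]⟩
    | zero => exact ⟨0, by simp [intVec, dotProduct]⟩
    | add a b _ _ ha hb =>
      obtain ⟨a', ha⟩ := ha
      obtain ⟨b', hb⟩ := hb
      refine ⟨a' + b', ?_⟩
      rw [show intVec (a + b) = intVec a + intVec b by ext; simp [intVec], dotProduct_add, ha, hb]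
      push_cast; rfl
    | smul r a _ ha =>
      obtain ⟨a', ha⟩ := ha
      refine ⟨r * a', ?_⟩
      rw [show intVec (r • a) = (r : ℝ) • intVec a by ext; simp [intVec], dotProduct_smul, ha]
      push_cast; rfl
  simp only [← Finset.mul_sum] at h2
  have hcard : (Nat.card ((Fin n → ℤ) ⧸ L) : ℂ) ≠ 0 := by
    exact_mod_cast Nat.card_pos.ne'
  -- lattice points are the multi-indices whose combination of the `M j` is integral
  set φ : (Fin n → ℤ) → (Fin n → ℤ) := fun p j => (p - v) ⬝ᵥ w j with hφ
  have hcast : ∀ p j, ((φ p j : ℤ) : ℝ) = intVec (p - v) ⬝ᵥ intVec (w j) := fun p j => by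
    simp [hφ, dotProduct, intVec]
  have hφM : ∀ p, ∑ j, (φ p j : ℝ) • M j = intVec (p - v) := fun p => by
    simp only [hcast]
    exact dual_expand (fun j => intVec (w j)) M hM _
  have hiv : Function.Injective (intVec (n := n)) := fun a b hab => by
    ext i
    have := congrFun hab i
    simpa [intVec] using this
  have hinj : Function.Injective φ := by
    intro p q hpq
    have := hφM p
    rw [hpq, hφM q] at this
    simpa using (hiv this).symm
  rw [← hinj.hasSum_iff] at h2
  · refine hasSum_of_eq h2 (fun p => ?_) rfl
    simp only [Function.comp_apply]
    rw [sum_char L _ (hdual _), hφM, if_pos ⟨_, rfl⟩]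
    have e : Complex.exp (cpair (intVec p) z) =
        Complex.exp (cpair (intVec v) z) * Complex.exp (cpair (intVec (p - v)) z) := by
      rw [← Complex.exp_add, ← cpair_add]
      congr 2
      ext i; simp [intVec]
    rw [e]
    simp only [hc, hcast]
    field_simp
  · intro k hk
    rw [sum_char L _ (hdual _), if_neg, mul_zero, mul_zero]
    rintro ⟨b, hb⟩
    refine hk ⟨b + v, funext fun j => ?_⟩
    have : (intVec b) ⬝ᵥ intVec (w j) = k j := by
      rw [hb, sum_dotProduct]; simp [hM]
    have h3 := hcast (b + v) j
    rw [add_sub_cancel_right, this] at h3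
    exact_mod_cast h3

/-! ### Faces of a simple polyhedron -/


section faces
variable {n : ℕ} {ι : Type*} [Fintype ι] {U : ι → Fin n → ℝ} {l : ι → ℝ}
  {V : Finset (Fin n → ℝ)} {m : (Fin n → ℝ) → ι → (Fin n → ℝ)}

omit [Fintype ι] in
/-- `faceOf U l T` is exposed by minus the sum of the normals in `T`. -/
lemma isFaceOf_faceOf (T : Finset ι) (hT : (faceOf U l T).Nonempty) :
    IsFaceOf (poly U l) (faceOf U l T) := by
  obtain ⟨q, hq⟩ := hT
  refine Or.inr ⟨⟨q, hq⟩, -∑ F ∈ T, (dotProductBilin ℝ ℝ).flip (U F), ?_⟩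
  have e : ∀ x, (-∑ F ∈ T, (dotProductBilin ℝ ℝ).flip (U F) : (Fin n → ℝ) →ₗ[ℝ] ℝ) x =
      (∑ F ∈ T, l F) - ∑ F ∈ T, slack U l F x := fun x => by
    simp [slack, Finset.sum_add_distrib]
  ext x
  simp only [e, sub_le_sub_iff_left]
  constructor
  · intro hx
    refine ⟨hx.1, fun p hp => ?_⟩
    rw [Finset.sum_eq_zero fun F hF => hx.2 F hF]
    exact Finset.sum_nonneg fun F _ => hp F
  · rintro ⟨hx, h⟩
    have h1 := h q hq.1
    rw [Finset.sum_eq_zero fun F hF => hq.2 F hF] at h1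
    have h2 : ∀ F ∈ T, 0 ≤ slack U l F x := fun F _ => hx F
    exact ⟨hx, (Finset.sum_eq_zero_iff_of_nonneg h2).1 (le_antisymm h1 (Finset.sum_nonneg h2))⟩

/-- Every face is the intersection of the facets containing it: a point `x₀` of the face lying on
no further facet can be pushed away from any point of that intersection. -/
lemma exists_eq_faceOf (hne : (poly U l).Nonempty) {E : Set (Fin n → ℝ)}
    (hE : IsFaceOf (poly U l) E) : (∃ T, faceOf U l T = E) ∧ E.Nonempty := by
  obtain ⟨hEne, φ, hφ⟩ : E.Nonempty ∧ ∃ φ : (Fin n → ℝ) →ₗ[ℝ] ℝ,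
      E = {x | x ∈ poly U l ∧ ∀ p ∈ poly U l, φ p ≤ φ x} := by
    rcases hE with rfl | h
    · exact ⟨hne, 0, by ext; simp⟩
    · exact h
  refine ⟨⟨Finset.univ.filter fun F => ∀ x ∈ E, slack U l F x = 0, ?_⟩, hEne⟩
  have hEP : ∀ x ∈ E, x ∈ poly U l ∧ ∀ p ∈ poly U l, φ p ≤ φ x := fun x hx => by
    rw [hφ] at hx; exact hx
  have hlat : ∀ A : Finset ι, (∀ F ∈ A, ∃ x ∈ E, slack U l F x ≠ 0) →
      ∃ x ∈ E, ∀ F ∈ A, 0 < slack U l F x := by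
    intro A
    induction A using Finset.induction_on with
    | empty => exact fun _ => ⟨_, hEne.some_mem, by simp⟩
    | insert F A _ ih =>
      intro h
      obtain ⟨x, hx, hxA⟩ := ih fun G hG => h G (Finset.mem_insert_of_mem hG)
      obtain ⟨x', hx', hxF⟩ := h F (Finset.mem_insert_self _ _)
      have hs : ∀ G, slack U l G ((1 / 2 : ℝ) • (x + x')) =
          (slack U l G x + slack U l G x') / 2 := fun G => by
        simp only [slack, smul_dotProduct, add_dotProduct, smul_eq_mul]; ring
      refine ⟨(1 / 2 : ℝ) • (x + x'), ?_, fun G hG => ?_⟩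
      · rw [hφ]
        refine ⟨fun G => ?_, fun p hp => ?_⟩
        · rw [hs]
          have := (hEP x hx).1 G
          have := (hEP x' hx').1 G
          linarith
        · have := (hEP x hx).2 p hp
          have := (hEP x' hx').2 p hp
          rw [map_smul, map_add, smul_eq_mul]
          linarith
      · rw [hs]
        have h1 := (hEP x hx).1 G
        have h2 := (hEP x' hx').1 G
        rcases Finset.mem_insert.1 hG with rfl | hG
        · have := lt_of_le_of_ne h2 hxF.symm
          linarith
        · have := hxA G hG
          linarith
  obtain ⟨x₀, hx₀, hpos⟩ := hlat (Finset.univ.filter fun F => ¬ ∀ x ∈ E, slack U l F x = 0)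
    (fun F hF => by simpa using hF)
  ext p
  constructor
  · rintro ⟨hp, hpT⟩
    obtain ⟨t, ht, hstep⟩ := exists_step (hEP x₀ hx₀).1 (x₀ - p) fun F hF => by
      by_cases hFT : ∀ x ∈ E, slack U l F x = 0
      · rw [slack_sub (l := l), hF, hpT F (by simpa using hFT), sub_zero]
      · exact absurd hF (hpos F (by simpa using hFT)).ne'
    have h1 := (hEP x₀ hx₀).2 _ hstep
    rw [map_add, map_smul, map_sub, smul_eq_mul] at h1
    have h2 : φ x₀ ≤ φ p := by
      by_contra! h
      have := mul_pos ht (sub_pos.2 h)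
      linarith
    rw [hφ]
    exact ⟨hp, fun q hq => ((hEP x₀ hx₀).2 q hq).trans h2⟩
  · exact fun hp => ⟨(hEP p hp).1, fun F hF => (Finset.mem_filter.1 hF).2 p hp⟩

namespace SimpData
variable (D : SimpData U l V m)
include D

lemma subset_of_faceOf_subset {T T' : Finset ι} (hT : (faceOf U l T).Nonempty)
    (h : faceOf U l T ⊆ faceOf U l T') : T' ⊆ T := by
  intro F hF
  by_contra hFT
  obtain ⟨v, hv, hvT, -⟩ := D.exists_min_vertex T hT 0
  have hsub := (D.mem_faceOf_iff hv T).1 hvT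
  have hFv : F ∈ act U l v := mem_act.2 ((h hvT).2 F hF)
  obtain ⟨t, ht, h1, h2, h3⟩ := D.exists_edge hv hFv
  have := (h (a := v + t • m v F) ⟨h1, fun G hG => h3 G (hsub hG) fun e => hFT (e ▸ hG)⟩).2 F hF
  rw [h2] at this
  exact ht.ne' this

lemma faceOf_inj {T T' : Finset ι} (hT : (faceOf U l T).Nonempty)
    (h : faceOf U l T = faceOf U l T') : T = T' :=
  (D.subset_of_faceOf_subset (h ▸ hT) h.ge).antisymm (D.subset_of_faceOf_subset hT h.le)

lemma card_le {T : Finset ι} (hT : (faceOf U l T).Nonempty) : T.card ≤ n := by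
  obtain ⟨v, hv, hvT, -⟩ := D.exists_min_vertex T hT 0
  rw [← D.card v hv]
  exact Finset.card_le_card ((D.mem_faceOf_iff hv T).1 hvT)

lemma faceDim_faceOf {T : Finset ι} (hT : (faceOf U l T).Nonempty) :
    faceDim (faceOf U l T) = n - T.card := by
  obtain ⟨v, hv, hvT, -⟩ := D.exists_min_vertex T hT 0
  have hsub := (D.mem_faceOf_iff hv T).1 hvT
  let b : ↥(act U l v \ T) → (Fin n → ℝ) := fun F => m v F
  have hmem : ∀ F : ↥(act U l v \ T), (F : ι) ∈ act U l v := fun F =>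
    (Finset.mem_sdiff.1 F.2).1
  have hli : LinearIndependent ℝ b := by
    rw [Fintype.linearIndependent_iff]
    intro g hg F
    have h1 : (∑ G, g G • b G) ⬝ᵥ U F = 0 := by rw [hg, zero_dotProduct]
    rw [sum_dotProduct, Finset.sum_eq_single F] at h1
    · simpa [b, D.dual v hv F (hmem F) F (hmem F)] using h1
    · intro G _ hne
      have : (G : ι) ≠ F := fun e => hne (Subtype.ext e)
      simp [b, D.dual v hv G (hmem G) F (hmem F), this]
    · simp
  have hspan : vectorSpan ℝ (faceOf U l T) = Submodule.span ℝ (Set.range b) := by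
    apply le_antisymm
    · rw [vectorSpan_eq_span_vsub_set_right ℝ hvT, Submodule.span_le]
      rintro _ ⟨p, hp, rfl⟩
      simp only [vsub_eq_sub, SetLike.mem_coe]
      rw [D.expand hv]
      refine Submodule.sum_mem _ fun F hF => ?_
      by_cases hFT : F ∈ T
      · rw [hp.2 F hFT, zero_smul]
        exact Submodule.zero_mem _
      · exact Submodule.smul_mem _ _ (Submodule.subset_span
          ⟨⟨F, Finset.mem_sdiff.2 ⟨hF, hFT⟩⟩, rfl⟩)
    · rw [Submodule.span_le]
      rintro _ ⟨F, rfl⟩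
      obtain ⟨t, ht, h1, -, h3⟩ := D.exists_edge hv (hmem F)
      have hq : v + t • m v F ∈ faceOf U l T := ⟨h1, fun G hG => h3 G (hsub hG) fun e =>
        (Finset.mem_sdiff.1 F.2).2 (e ▸ hG)⟩
      have := vsub_mem_vectorSpan ℝ hq hvT
      rw [vsub_eq_sub, add_sub_cancel_left] at this
      simpa [b, ht.ne'] using Submodule.smul_mem _ t⁻¹ this
  rw [faceDim, direction_affineSpan, hspan, finrank_span_eq_card hli, Fintype.card_coe,
    Finset.card_sdiff_of_subset hsub, D.card v hv]

/-- Vertices are extreme points. -/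
lemma mem_extremePoints {v : Fin n → ℝ} (hv : v ∈ V) : v ∈ (poly U l).extremePoints ℝ := by
  refine ⟨D.mem_poly hv, fun a ha b hb hab => ?_⟩
  rw [← sub_eq_zero]
  refine ((D.mem_V v).1 hv).2 _ fun F hF => ?_
  obtain ⟨s, t, hs, ht, hst, rfl⟩ := hab
  have h1 : slack U l F (s • a + t • b) = s * slack U l F a + t * slack U l F b := by
    simp only [slack, add_dotProduct, smul_dotProduct, smul_eq_mul]
    linear_combination (-l F) * hst
  have h2 := ha F
  have h3 := mul_nonneg ht.le (hb F)
  rw [slack_sub (l := l), hF, sub_zero]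
  rw [hF] at h1
  by_contra h
  have := mul_pos hs (lt_of_le_of_ne h2 (Ne.symm h))
  linarith

end SimpData
end faces

/-! ### Comparison of the two sides -/

section main
variable {n : ℕ} {ι : Type*} [Fintype ι] {u : ι → Fin n → ℤ}
  {U : ι → Fin n → ℝ} {l : ι → ℝ}  {V : Finset (Fin n → ℝ)} {m : (Fin n → ℝ) → ι → (Fin n → ℝ)}

lemma finite_lattice {P : Set (Fin n → ℝ)} (hP : Bornology.IsBounded P) :
    {p : Fin n → ℤ | intVec p ∈ P}.Finite := by
  obtain ⟨R, hR⟩ := hP.exists_norm_le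
  refine (Set.finite_Icc (fun _ : Fin n => -⌈R⌉) (fun _ => ⌈R⌉)).subset fun p hp => ?_
  have h : ∀ i, |(p i : ℝ)| ≤ ⌈R⌉ := fun i =>
    ((norm_le_pi_norm (intVec p) i).trans (hR _ hp)).trans (Int.le_ceil R)
  have h' : ∀ i, |p i| ≤ ⌈R⌉ := fun i => by exact_mod_cast h i
  exact ⟨fun i => (abs_le.1 (h' i)).1, fun i => (abs_le.1 (h' i)).2⟩

/-- Collecting the face sum by lattice points: the weight of a point on `k` facets is
`∑_{T ⊆ facets through it} (y + 1) ^ (n - #T) * (-y) ^ #T = (y + 1) ^ (n - k)`. -/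
lemma face_sum_eq (D : SimpData U l V m) (y : ℂ)
    (z : Fin n → ℂ) :
    (∑ T : Finset ι, if (faceOf U l T).Nonempty then
      (y + 1) ^ (n - T.card) * (-y) ^ T.card *
        ∑ᶠ p ∈ {p : Fin n → ℤ | intVec p ∈ faceOf U l T}, Complex.exp (cpair (intVec p) z)
      else 0) =
    ∑ p ∈ (finite_lattice D.bdd).toFinset,
      Complex.exp (cpair (intVec p) z) * (y + 1) ^ (n - (act U l (intVec p)).card) := by
  set B := (finite_lattice D.bdd).toFinset with hB
  have h1 : ∀ T : Finset ι, (if (faceOf U l T).Nonempty then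
      (y + 1) ^ (n - T.card) * (-y) ^ T.card *
        ∑ᶠ p ∈ {p : Fin n → ℤ | intVec p ∈ faceOf U l T}, Complex.exp (cpair (intVec p) z)
      else 0) = ∑ p ∈ B, if T ⊆ act U l (intVec p) then
        Complex.exp (cpair (intVec p) z) * ((-y) ^ T.card * (y + 1) ^ (n - T.card)) else 0 := by
    intro T
    have hmem : ∀ p ∈ B, (T ⊆ act U l (intVec p) ↔ intVec p ∈ faceOf U l T) := fun p hp =>
      ⟨fun h => ⟨by simpa [hB] using hp, fun F hF => mem_act.1 (h hF)⟩,
        fun h F hF => mem_act.2 (h.2 F hF)⟩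
    split_ifs with hT
    · have hfT : {p : Fin n → ℤ | intVec p ∈ faceOf U l T}.Finite :=
        (finite_lattice D.bdd).subset fun p hp => hp.1
      rw [finsum_mem_eq_finite_toFinset_sum _ hfT, Finset.mul_sum, ← Finset.sum_filter]
      refine Finset.sum_congr ?_ fun p _ => by ring
      ext p
      simp only [Set.Finite.mem_toFinset, Finset.mem_filter, Set.mem_ofPred_eq]
      constructor
      · intro h
        have hp : p ∈ B := by simpa [hB] using h.1
        exact ⟨hp, (hmem p hp).2 h⟩
      · exact fun h => (hmem p h.1).1 h.2
    · exact (Finset.sum_eq_zero fun p hp => if_neg fun h => hT ⟨_, (hmem p hp).1 h⟩).symm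
  rw [Finset.sum_congr rfl fun T _ => h1 T, Finset.sum_comm]
  refine Finset.sum_congr rfl fun p hp => ?_
  have hpP : intVec p ∈ poly U l := by simpa [hB] using hp
  have hcard : (act U l (intVec p)).card ≤ n :=
    D.card_le ⟨intVec p, hpP, fun F hF => mem_act.1 hF⟩
  rw [← Finset.sum_filter, ← Finset.mul_sum]
  congr 1
  have h2 := Finset.sum_pow_mul_eq_add_pow (-y) (y + 1) (act U l (intVec p))
  rw [neg_add_cancel_left, one_pow] at h2
  have h3 : (Finset.univ.filter fun T => T ⊆ act U l (intVec p)) =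
      (act U l (intVec p)).powerset := by ext; simp
  have h4 : (y + 1) ^ (n - (act U l (intVec p)).card) =
      (y + 1) ^ (n - (act U l (intVec p)).card) * ∑ T ∈ (act U l (intVec p)).powerset,
        (-y) ^ T.card * (y + 1) ^ ((act U l (intVec p)).card - T.card) := by
    rw [h2, mul_one]
  rw [h3, h4, Finset.mul_sum]
  refine Finset.sum_congr rfl fun T hT => ?_
  have hle := Finset.card_le_card (Finset.mem_powerset.1 hT)
  rw [show n - T.card = (n - (act U l (intVec p)).card) +
    ((act U l (intVec p)).card - T.card) by omega, pow_add]
  ring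

/-- The contribution of a vertex `v` with active normals `w j` and dual basis `M j`. -/
def vertexTerm (w : Fin n → Fin n → ℤ) (M : Fin n → Fin n → ℝ) (v : Fin n → ℝ) (y : ℂ)
    (z : Fin n → ℂ) : ℂ :=
  Complex.exp (cpair v z) / (Nat.card ((Fin n → ℤ) ⧸ Submodule.span ℤ (Set.range w)) : ℂ) *
    ∑ᶠ γ : (Fin n → ℤ) ⧸ Submodule.span ℤ (Set.range w),
      ∏ j, ((y + 1) / (1 - Complex.exp (2 * Real.pi * Complex.I *
        ∑ i, (M j i : ℂ) * ((Quotient.out γ) i : ℂ)) * Complex.exp (cpair (M j) z)) - y)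

/-- The formula when no edge direction is orthogonal to `Re z`. -/
lemma brion_generic (hU : ∀ F, U F = intVec (u F)) (D : SimpData U l V m)
    (Fv : (Fin n → ℝ) → Fin n → ι) (hinj : ∀ v ∈ V, Function.Injective (Fv v))
    (hact : ∀ v ∈ V, act U l v =
      Finset.univ.image (Fv v))
    (hlat : ∀ v ∈ V, ∃ p : Fin n → ℤ, v = intVec p) (y : ℂ) (z : Fin n → ℂ)
    (hz : ∀ v ∈ V, ∀ j, m v (Fv v j) ⬝ᵥ (fun i => (z i).re) ≠ 0) :
    ∑ p ∈ (finite_lattice D.bdd).toFinset, Complex.exp (cpair (intVec p) z) * (y + 1) ^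
        (n - (act U l (intVec p)).card) =
      ∑ v ∈ V, vertexTerm (fun j => u (Fv v j)) (fun j => m v (Fv v j)) v y z := by
  set ξ : Fin n → ℝ := fun i => (z i).re with hξ
  have hmem : ∀ v ∈ V, ∀ j, Fv v j ∈ act U l v := fun v hv j => by simp [hact v hv]
  have h1 : ∀ v ∈ V, HasSum (fun p : Fin n → ℤ => Complex.exp (cpair (intVec p) z) *
      ∏ F ∈ act U l v, (wt y (slack U l F (intVec p)) - if 0 < m v F ⬝ᵥ ξ then y + 1 else 0))
      (vertexTerm (fun j => u (Fv v j)) (fun j => m v (Fv v j)) v y z) := by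
    intro v hv
    obtain ⟨q, hq⟩ := hlat v hv
    have hM : ∀ j j', m v (Fv v j) ⬝ᵥ intVec (u (Fv v j')) = if j = j' then 1 else 0 := by
      intro j j'
      have := D.dual v hv _ (hmem v hv j) _ (hmem v hv j')
      simpa [hU, (hinj v hv).eq_iff] using this
    have := hasSum_vertex (fun j => u (Fv v j)) (fun j => m v (Fv v j)) hM q y z (hz v hv)
    rw [← hq] at this
    refine hasSum_of_eq this (fun p => ?_) rfl
    rw [hact v hv, Finset.prod_image fun a _ b _ h => hinj v hv h]
    refine congrArg _ (Finset.prod_congr rfl fun j _ => ?_)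
    have e : intVec (p - q) ⬝ᵥ intVec (u (Fv v j)) = slack U l (Fv v j) (intVec p) := by
      have h2 := slack_sub (U := U) (l := l) (Fv v j) (intVec p) (intVec q)
      have h0 : slack U l (Fv v j) (intVec q) = 0 :=
        (congrArg (slack U l (Fv v j)) hq).symm.trans (mem_act.1 (hmem v hv j))
      rw [h0, sub_zero] at h2
      rw [← h2, ← hU]
      congr 1
      ext i; simp [intVec]
    rw [e]
  have h2 := hasSum_sum h1
  simp only [← Finset.mul_sum] at h2
  have hgen : ∀ v ∈ V, ∀ F ∈ act U l v, m v F ⬝ᵥ ξ ≠ 0 := by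
    intro v hv F hF
    rw [hact v hv] at hF
    obtain ⟨j, -, rfl⟩ := Finset.mem_image.1 hF
    exact hz v hv j
  simp only [D.sum_wt y _ ξ hgen] at h2
  have h3 := hasSum_sum_of_ne_finset_zero (L := .unconditional _)
    (s := (finite_lattice D.bdd).toFinset)
    (f := fun p : Fin n → ℤ => Complex.exp (cpair (intVec p) z) *
      if intVec p ∈ poly U l then (y + 1) ^ (n - (act U l (intVec p)).card) else 0) (by
      intro p hp
      have : intVec p ∉ poly U l := by simpa using hp
      simp [this])
  rw [← h3.unique h2]
  refine Finset.sum_congr rfl fun p hp => ?_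
  have : intVec p ∈ poly U l := by simpa using hp
  rw [if_pos this]

lemma continuous_cpair_line (a : Fin n → ℝ) (z : Fin n → ℂ) (ζ : Fin n → ℝ) :
    Continuous fun t : ℝ => cpair a (fun i => z i + (t * ζ i : ℝ)) := by
  unfold cpair
  fun_prop

/-- The formula for all admissible `z`, by perturbing `z` along a generic real direction. -/
lemma brion (hU : ∀ F, U F = intVec (u F)) (D : SimpData U l V m)
    (Fv : (Fin n → ℝ) → Fin n → ι) (hinj : ∀ v ∈ V, Function.Injective (Fv v))
    (hact : ∀ v ∈ V, act U l v =
      Finset.univ.image (Fv v))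
    (hlat : ∀ v ∈ V, ∃ p : Fin n → ℤ, v = intVec p) (y : ℂ) (z : Fin n → ℂ)
    (hz : ∀ v ∈ V, ∀ γ : (Fin n → ℤ) ⧸ Submodule.span ℤ (Set.range fun j => u (Fv v j)), ∀ j,
      Complex.exp (2 * Real.pi * Complex.I *
        ∑ i, (m v (Fv v j) i : ℂ) * ((Quotient.out γ) i : ℂ)) *
          Complex.exp (cpair (m v (Fv v j)) z) ≠ 1) :
    ∑ p ∈ (finite_lattice D.bdd).toFinset, Complex.exp (cpair (intVec p) z) * (y + 1) ^
        (n - (act U l (intVec p)).card) =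
      ∑ v ∈ V, vertexTerm (fun j => u (Fv v j)) (fun j => m v (Fv v j)) v y z := by
  obtain ⟨ζ, hζ⟩ := D.exists_generic
  set zt : ℝ → Fin n → ℂ := fun t i => z i + (t * ζ i : ℝ) with hzt
  have hmem : ∀ v ∈ V, ∀ j, Fv v j ∈ act U l v :=
    fun v hv j => by simp [hact v hv]
  have hz0 : zt 0 = z := by ext i; simp [hzt]
  have hev : ∀ᶠ t in 𝓝[>] (0 : ℝ), ∑ p ∈ (finite_lattice D.bdd).toFinset,
      Complex.exp (cpair (intVec p) (zt t)) * (y + 1) ^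
        (n - (act U l (intVec p)).card) =
      ∑ v ∈ V, vertexTerm (fun j => u (Fv v j)) (fun j => m v (Fv v j)) v y (zt t) := by
    have h1 : ∀ᶠ t in 𝓝[>] (0 : ℝ), ∀ v ∈ V, ∀ j,
        m v (Fv v j) ⬝ᵥ (fun i => (z i).re) + t * (m v (Fv v j) ⬝ᵥ ζ) ≠ 0 :=
      (Finset.eventually_all V).2 fun v hv => eventually_all.2 fun j =>
        SimpData.eventually_ne_zero _ _ (hζ v hv _ (hmem v hv j))
    filter_upwards [h1] with t ht
    refine brion_generic hU D Fv hinj hact hlat y (zt t) fun v hv j => ?_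
    have e : (fun i => (zt t i).re) = (fun i => (z i).re) + t • ζ := by
      ext i; simp [hzt]
    rw [e, dotProduct_add, dotProduct_smul, smul_eq_mul]
    exact ht v hv j
  have hL : Tendsto (fun t => ∑ p ∈ (finite_lattice D.bdd).toFinset,
      Complex.exp (cpair (intVec p) (zt t)) * (y + 1) ^
        (n - (act U l (intVec p)).card))
      (𝓝[>] 0) (𝓝 (∑ p ∈ (finite_lattice D.bdd).toFinset,
      Complex.exp (cpair (intVec p) (zt 0)) * (y + 1) ^
        (n - (act U l (intVec p)).card))) := by
    refine (Continuous.tendsto ?_ 0).mono_left nhdsWithin_le_nhds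
    exact continuous_finsetSum _ fun p _ =>
      (Complex.continuous_exp.comp (continuous_cpair_line _ z ζ)).mul continuous_const
  have hR : Tendsto (fun t => ∑ v ∈ V,
      vertexTerm (fun j => u (Fv v j)) (fun j => m v (Fv v j)) v y (zt t))
      (𝓝[>] 0) (𝓝 (∑ v ∈ V,
      vertexTerm (fun j => u (Fv v j)) (fun j => m v (Fv v j)) v y (zt 0))) := by
    refine tendsto_finsetSum _ fun v hv => ?_
    have hM : ∀ j j', m v (Fv v j) ⬝ᵥ intVec (u (Fv v j')) = if j = j' then 1 else 0 := by
      intro j j'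
      have := D.dual v hv _ (hmem v hv j) _ (hmem v hv j')
      simpa [hU, (hinj v hv).eq_iff] using this
    have hfin := finite_quot (fun j => u (Fv v j)) (fun j => m v (Fv v j)) hM
    have := Fintype.ofFinite
      ((Fin n → ℤ) ⧸ Submodule.span ℤ (Set.range fun j => u (Fv v j)))
    simp only [vertexTerm, finsum_eq_sum_of_fintype]
    have hc : ∀ a : Fin n → ℝ, ContinuousAt (fun t => Complex.exp (cpair a (zt t))) 0 :=
      fun a => (Complex.continuous_exp.comp (continuous_cpair_line a z ζ)).continuousAt
    refine Tendsto.mono_left (ContinuousAt.tendsto ?_) nhdsWithin_le_nhds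
    refine ((hc v).div_const _).mul (tendsto_finsetSum _ fun γ _ => tendsto_finsetProd _
      fun j _ => ?_)
    refine ContinuousAt.sub (ContinuousAt.div continuousAt_const
      (continuousAt_const.sub (continuousAt_const.mul (hc _))) ?_) continuousAt_const
    rw [hz0]
    exact sub_ne_zero.2 (hz v hv γ j).symm
  have := tendsto_nhds_unique (hL.congr' hev) hR
  rwa [hz0] at this

end main

/-- Let `P ⊂ ℝ^n` be a full-dimensional simple lattice polytope with
Brion–Vergne vertex data, `y ∈ ℝ`, and `z ∈ ℂ^n` generic as described.  Then
`∑_{E face of P} (y+1)^{dim E} (-y)^{n - dim E} ∑_{m ∈ ℤ^n ∩ E} e^{⟨m,z⟩}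
  = ∑_v (e^{⟨v,z⟩}/|G(σ_v)|) ∑_{γ ∈ G(σ_v)}
      ∏_{F ∈ 𝓕^v} ((y+1)/(1 - χ_γ(m_v^F) e^{⟨m_v^F,z⟩}) - y)`. -/
theorem stmt16 (n : ℕ) (P : Set (Fin n → ℝ))
    (S : Finset (Fin n → ℤ))
    (hP : P = convexHull ℝ (intVec '' (S : Set (Fin n → ℤ))))
    (hfull : affineSpan ℝ P = ⊤) (hsimple : IsSimple P)
    (u : Set (Fin n → ℝ) → (Fin n → ℤ)) (lam : Set (Fin n → ℝ) → ℤ)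
    (hPdesc : P = {x | ∀ F, IsFaceOf P F → faceDim F = n - 1 →
      0 ≤ (∑ i, x i * (u F i : ℝ)) + (lam F : ℝ)})
    (hprim : ∀ F, IsFaceOf P F → faceDim F = n - 1 →
      ∀ c : ℤ, 0 < c → (∀ i, c ∣ u F i) → c = 1)
    (hfacet : ∀ F, IsFaceOf P F → faceDim F = n - 1 →
      F = {x | x ∈ P ∧ (∑ i, x i * (u F i : ℝ)) + (lam F : ℝ) = 0})
    (Fv : (Fin n → ℝ) → Fin n → Set (Fin n → ℝ))
    (hFv : ∀ x, IsFaceOf P {x} → Function.Injective (Fv x) ∧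
      (∀ j, IsFaceOf P (Fv x j) ∧ faceDim (Fv x j) = n - 1 ∧ x ∈ Fv x j) ∧
      (∀ F, IsFaceOf P F → faceDim F = n - 1 → x ∈ F → ∃ j, F = Fv x j))
    (m : (Fin n → ℝ) → Fin n → (Fin n → ℝ))
    (hm : ∀ x, IsFaceOf P {x} → ∀ j j' : Fin n,
      (∑ i, m x j i * (u (Fv x j') i : ℝ)) = if j = j' then 1 else 0)
    (hfin : {F : Set (Fin n → ℝ) | IsFaceOf P F}.Finite)
    (y : ℝ) (z : Fin n → ℂ)
    (hz : ∀ x, IsFaceOf P {x} → ∀ γ : (Fin n → ℤ) ⧸ normalLattice u Fv x, ∀ j : Fin n,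
      chi u Fv m x γ j * Complex.exp (cpair (m x j) z) ≠ 1) :
    ∑ E ∈ hfin.toFinset, ((y : ℂ) + 1) ^ faceDim E * (-(y : ℂ)) ^ (n - faceDim E) *
        ∑ᶠ mm ∈ {mm : Fin n → ℤ | intVec mm ∈ E}, Complex.exp (cpair (intVec mm) z)
      = ∑ᶠ x ∈ {x : Fin n → ℝ | IsFaceOf P {x}},
          Complex.exp (cpair x z) / (Nat.card ((Fin n → ℤ) ⧸ normalLattice u Fv x) : ℂ) *
            ∑ᶠ γ : (Fin n → ℤ) ⧸ normalLattice u Fv x,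
              ∏ j : Fin n,
                (((y : ℂ) + 1) /
                    (1 - chi u Fv m x γ j * Complex.exp (cpair (m x j) z)) - (y : ℂ)) := by
  have hn : n ≠ 0 := by
    -- In dimension `0` the face `P` would count as a facet, whose normal is the empty vector.
    rintro rfl
    have h := hprim P (Or.inl rfl) Module.finrank_zero_of_subsingleton 2 two_pos
      fun i => i.elim0
    omega
  have hPne : P.Nonempty := by
    rw [Set.nonempty_iff_ne_empty]
    rintro rfl
    rw [AffineSubspace.span_empty] at hfull
    exact AffineSubspace.bot_ne_top ℝ (Fin n → ℝ) (Fin n → ℝ) hfull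
  have hPbdd : Bornology.IsBounded P := by
    rw [hP, isBounded_convexHull]
    exact (S.finite_toSet.image _).isBounded
  let ι := {F : Set (Fin n → ℝ) // IsFaceOf P F ∧ faceDim F = n - 1}
  have : Finite ι := (hfin.subset fun F hF => hF.1 :
    {F : Set (Fin n → ℝ) | IsFaceOf P F ∧ faceDim F = n - 1}.Finite)
  have := Fintype.ofFinite ι
  let U : ι → Fin n → ℝ := fun F => intVec (u F.1)
  let l : ι → ℝ := fun F => (lam F.1 : ℝ)
  have hpoly : poly U l = P := by
    refine Eq.trans ?_ hPdesc.symm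
    ext x
    exact ⟨fun h F h1 h2 => h ⟨F, h1, h2⟩, fun h F => h F.1 F.2.1 F.2.2⟩
  have hfacet' : ∀ (F : ι) x, x ∈ F.1 ↔ x ∈ P ∧ slack U l F x = 0 := fun F x => by
    have h := hfacet F.1 F.2.1 F.2.2
    exact ⟨fun hx => h.le hx, fun hx => h.ge hx⟩
  have hvP : ∀ x, IsFaceOf P {x} → x ∈ P := by
    rintro x (h | ⟨-, φ, h⟩)
    · exact h.le rfl
    · exact (h.le rfl : x ∈ P ∧ _).1
  have hVfin : {x : Fin n → ℝ | IsFaceOf P {x}}.Finite :=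
    hfin.preimage (f := fun x : Fin n → ℝ => ({x} : Set (Fin n → ℝ)))
      Set.singleton_injective.injOn
  set V := hVfin.toFinset with hV
  have memV : ∀ x, x ∈ V ↔ IsFaceOf P {x} := fun x => by simp [hV]
  let m' : (Fin n → ℝ) → ι → (Fin n → ℝ) := fun x F =>
    if h : ∃ j, F.1 = Fv x j then m x h.choose else 0
  have key : ∀ x, IsFaceOf P {x} → ∃ g : Fin n → ι, Function.Injective g ∧
      act U l x = Finset.univ.image g ∧ (∀ j, (g j).1 = Fv x j) ∧
      ∀ j, m' x (g j) = m x j := by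
    intro x hx
    obtain ⟨h1, h2, h3⟩ := hFv x hx
    refine ⟨fun j => ⟨Fv x j, (h2 j).1, (h2 j).2.1⟩, fun a b h => h1 (congrArg Subtype.val h),
      ?_, fun _ => rfl, fun j => ?_⟩
    · ext F
      simp only [mem_act, Finset.mem_image, Finset.mem_univ, true_and]
      constructor
      · intro hF
        obtain ⟨j, hj⟩ := h3 F.1 F.2.1 F.2.2 ((hfacet' F x).2 ⟨hvP x hx, hF⟩)
        exact ⟨j, Subtype.ext hj.symm⟩
      · rintro ⟨j, rfl⟩
        exact ((hfacet' _ x).1 (h2 j).2.2).2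
    · have h : ∃ j', Fv x j = Fv x j' := ⟨j, rfl⟩
      have e : m' x ⟨Fv x j, (h2 j).1, (h2 j).2.1⟩ = m x h.choose := dif_pos h
      rw [e, ← h1 h.choose_spec]
  have D : SimpData U l V m' := by
    refine ⟨hpoly ▸ hPbdd, fun x => ?_, fun v hv => ?_, fun v hv => ?_⟩
    · rw [memV]
      constructor
      · intro hx
        refine ⟨hpoly ▸ hvP x hx, fun d hd => ?_⟩
        obtain ⟨h1, h2, h3⟩ := hFv x hx
        rw [← dual_expand (fun j => intVec (u (Fv x j))) (m x) (hm x hx) d]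
        refine Finset.sum_eq_zero fun j _ => ?_
        have : d ⬝ᵥ intVec (u (Fv x j)) = 0 :=
          hd ⟨Fv x j, (h2 j).1, (h2 j).2.1⟩ ((hfacet' _ x).1 (h2 j).2.2).2
        rw [this, zero_smul]
      · rintro ⟨hx, h⟩
        have e : faceOf U l (act U l x) = {x} := by
          ext p
          refine ⟨fun hp => ?_, ?_⟩
          · refine sub_eq_zero.1 (h (p - x) fun F hF => ?_)
            rw [slack_sub (l := l), hF, hp.2 F (mem_act.2 hF), sub_zero]
          · rintro rfl
            exact ⟨hx, fun F hF => mem_act.1 hF⟩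
        rw [← hpoly, ← e]
        exact isFaceOf_faceOf _ (e ▸ Set.singleton_nonempty x)
    · obtain ⟨g, hg, hact, -⟩ := key v ((memV v).1 hv)
      rw [hact, Finset.card_image_of_injective _ hg, Finset.card_univ, Fintype.card_fin]
    · obtain ⟨g, hg, hact, hgF, hgm⟩ := key v ((memV v).1 hv)
      rw [hact]
      intro F hF F' hF'
      obtain ⟨j, -, rfl⟩ := Finset.mem_image.1 hF
      obtain ⟨j', -, rfl⟩ := Finset.mem_image.1 hF'
      have h := hm v ((memV v).1 hv) j j'
      rw [← hgF] at h
      rw [hgm, hg.eq_iff]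
      refine Eq.trans rfl (h.trans ?_)
      split_ifs <;> rfl
  have hne : (faceOf U l ∅).Nonempty := by
    obtain ⟨x, hx⟩ := hPne
    exact ⟨x, hpoly ▸ hx, by simp⟩
  obtain ⟨v₀, hv₀, -⟩ := D.exists_min_vertex ∅ hne 0
  have : Nonempty ι := ⟨(key v₀ ((memV v₀).1 hv₀)).choose ⟨0, Nat.pos_of_ne_zero hn⟩⟩
  choose! g hginj hact hgF hgm using key
  have hlat : ∀ v ∈ V, ∃ p : Fin n → ℤ, v = intVec p := by
    intro v hv
    have h := D.mem_extremePoints hv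
    rw [hpoly, hP] at h
    obtain ⟨p, -, hp⟩ := extremePoints_convexHull_subset h
    exact ⟨p, hp.symm⟩
  have hLHS : hfin.toFinset =
      (Finset.univ.filter fun T => (faceOf U l T).Nonempty).image (faceOf U l) := by
    ext E
    simp only [Set.Finite.mem_toFinset, Finset.mem_image, Finset.mem_filter, Finset.mem_univ,
      true_and]
    constructor
    · intro hE
      have hE' : IsFaceOf (poly U l) E := hpoly.symm ▸ hE
      obtain ⟨⟨T, rfl⟩, h⟩ := exists_eq_faceOf (hpoly.symm ▸ hPne) hE'
      exact ⟨T, h, rfl⟩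
    · rintro ⟨T, hT, rfl⟩
      have := isFaceOf_faceOf T hT
      rwa [hpoly] at this
  rw [hLHS, Finset.sum_image fun T hT T' _ h => D.faceOf_inj (Finset.mem_filter.1 hT).2 h,
    Finset.sum_filter]
  have hface := face_sum_eq D (y : ℂ) z
  have hz' : ∀ v ∈ V, ∀ γ : (Fin n → ℤ) ⧸ Submodule.span ℤ (Set.range fun j => u (g v j).1),
      ∀ j, Complex.exp (2 * Real.pi * Complex.I *
        ∑ i, (m' v (g v j) i : ℂ) * ((Quotient.out γ) i : ℂ)) *
          Complex.exp (cpair (m' v (g v j)) z) ≠ 1 := by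
    intro v hv
    have hv' := (memV v).1 hv
    have e : (fun j => u (g v j).1) = fun j => u (Fv v j) := by simp only [hgF v hv']
    rw [e]
    simp only [hgm v hv']
    exact hz v hv'
  have hbrion := brion (U := U) (u := fun F : ι => u F.1) (fun _ => rfl) D g
    (fun v hv => hginj v ((memV v).1 hv))
    (fun v hv => by convert hact v ((memV v).1 hv)) hlat (y : ℂ) z hz'
  refine Eq.trans (Finset.sum_congr rfl fun T _ => ?_) ((hface.trans hbrion).trans ?_)
  · split_ifs with hT
    · rw [D.faceDim_faceOf hT, Nat.sub_sub_self (D.card_le hT)]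
    · rfl
  · rw [finsum_mem_eq_finite_toFinset_sum _ hVfin]
    refine Finset.sum_congr rfl fun v hv => ?_
    have hv' := (memV v).1 hv
    simp only [hgF v hv', hgm v hv']
    rfl
end
end

section
/- Let P ⊂ ℝ^n be a full-dimensional simple lattice polytope with the vertex data u_F, λ_F, m_v^F, G(σ_v) described in the context, and let y be a real number with y + 1 > 0. For a real multiparameter h = (h_F) indexed by the facets of P, let P̃(h) = {x ∈ ℝ^n : ⟨x, u_F⟩ + (y+1)λ_F + h_F ≥ 0 for all facets F}. Then there exists ε > 0 such that for all h with |h_F| < ε for every facet F, and for every z ∈ ℂ^n with ⟨m_v^F, z⟩ ≠ 0 for all vertices v and all F ∈ 𝓕^v: ∫_{P̃(h)} exp(⟨x,z⟩) dx = (−1)^n · Σ_{v vertex of P} (exp(⟨v(h), z⟩)/|G(σ_v)|) · Π_{F ∈ 𝓕^v} 1/⟨m_v^F, z⟩, where v(h) = (y+1)·v − Σ_{F ∈ 𝓕^v} h_F · m_v^F and the integral is with respect to Lebesgue measure. -/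
/-!
The formula comes from the polar decomposition of a simple polytope (Lawrence, Varchenko). Fix a
functional `ξ` orthogonal to no edge. At each vertex `v` write a point in the coordinates
`a_F(x) = ⟨x, u_F⟩ + b_F`, `F ∈ 𝓕^v`, of the tangent cone and reverse those edges on which `ξ` is
positive, with a sign `-1` for each. The signed indicators of the resulting cones add up to the
indicator of the polytope (`PolarData.polar_eq`), for the following reasons.

* On the polytope only the cone at the vertex maximizing `ξ` contributes (`polar_of_mem`).
* If `ξ` strictly separates `x` from all vertices, no cone contains `x` (`polar_of_lt`).
* The signed count does not depend on `ξ`. Moving `ξ` along a generic segment, it could only change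
  when `ξ` becomes orthogonal to an edge, and then the changes at the two ends of that edge cancel,
  since the other edge directions at these ends agree modulo the edge (`polar_local`,
  `polar_segment`). For `x` outside the polytope, `ξ` may thus be replaced by a functional close to
  the outer normal of a violated facet.

Taking `ξ = Re z`, every polarized cone has an integrable exponential, with integral
`exp ⟨p, z⟩ |det m| ∏ (-1 / ⟨m_F, z⟩)` (`cone_integral`). This proves the formula when no edge is
orthogonal to `Re z`. The other `z` with all `⟨m_F, z⟩ ≠ 0` follow by dominated convergence
(`PolarData.integral_body`).

It remains to see that `P̃(h)` carries the combinatorial data of `P` when `h` is small. Following an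
edge of `P` until it meets a new facet gives the neighbouring vertex (`exists_next_vertex`), and the
points `v(h)` lie on the facets of `𝓕^v` and strictly inside all others once `h` is small. Finally
`|det m_v| = 1 / |G(σ_v)|` by `abs_det_eq_inv_card`.
-/

open scoped Pointwise Classical
open MeasureTheory Polynomial

noncomputable section

/-! ### Vertices and edges of a simple polytope -/

/-- The vertex data of a simple polytope `{x | ∀ F ∈ T, 0 ≤ ⟨x, u F⟩ + b F}`: vertices are labelled
by `α` and facets by `β`. The facets through the vertex `p v` are `Fs v`, and `M v F`, `F ∈ Fs v`, is
the basis dual to their normals. -/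
structure PolarData (n : ℕ) (α β : Type*) where
  /-- The facets. -/
  T : Finset β
  /-- The inner normals. -/
  u : β → Fin n → ℝ
  /-- The offsets of the facets. -/
  b : β → ℝ
  /-- The facets through a vertex. -/
  Fs : α → Finset β
  /-- The edge directions at a vertex: `M v F` is that of the edge leaving the facet `F`. -/
  M : α → β → Fin n → ℝ
  /-- The position of a vertex. -/
  p : α → Fin n → ℝ
  Fs_sub : ∀ v, Fs v ⊆ T
  Fs_inj : ∀ v w, Fs v = Fs w → v = w
  dual : ∀ v, ∀ F ∈ Fs v, ∀ G ∈ Fs v, M v F ⬝ᵥ u G = if F = G then 1 else 0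
  expand : ∀ v d, d = ∑ F ∈ Fs v, (d ⬝ᵥ u F) • M v F
  zero : ∀ v, ∀ F ∈ Fs v, p v ⬝ᵥ u F + b F = 0
  pos : ∀ v, ∀ F ∈ T, F ∉ Fs v → 0 < p v ⬝ᵥ u F + b F
  nb : ∀ v, ∀ F ∈ Fs v, ∃ w, w ≠ v ∧ ∃ G ∈ Fs w, (Fs w).erase G = (Fs v).erase F

namespace PolarData

variable {n : ℕ} {α β : Type*} (D : PolarData n α β)

/-- The affine function that is nonnegative on the inner side of the facet `F`. -/
def a (F : β) (x : Fin n → ℝ) : ℝ := x ⬝ᵥ D.u F + D.b F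

lemma a_nonneg (v : α) {F : β} (hF : F ∈ D.T) : 0 ≤ D.a F (D.p v) := by
  by_cases h : F ∈ D.Fs v
  · exact (D.zero v F h).ge
  · exact (D.pos v F hF h).le

lemma expand_pt (v : α) (x : Fin n → ℝ) :
    x = D.p v + ∑ F ∈ D.Fs v, D.a F x • D.M v F := by
  have h := D.expand v (x - D.p v)
  have h2 : ∑ F ∈ D.Fs v, ((x - D.p v) ⬝ᵥ D.u F) • D.M v F =
      ∑ F ∈ D.Fs v, D.a F x • D.M v F := by
    refine Finset.sum_congr rfl fun F hF => ?_
    have := D.zero v F hF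
    congr 1
    rw [sub_dotProduct, a]
    linarith
  rw [← h2, ← h]
  abel

lemma M_ne_zero (v : α) {F : β} (hF : F ∈ D.Fs v) : D.M v F ≠ 0 := by
  intro h
  have := D.dual v F hF F hF
  simp [h] at this

/-- The edge of `v` leaving the facet `F` ends at `w`, where it leaves the facet `G`. -/
def IsNbr (v : α) (F : β) (w : α) (G : β) : Prop :=
  w ≠ v ∧ F ∈ D.Fs v ∧ G ∈ D.Fs w ∧ (D.Fs w).erase G = (D.Fs v).erase F

variable {D}

lemma IsNbr.symm {v w : α} {F G : β} (h : D.IsNbr v F w G) : D.IsNbr w G v F :=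
  ⟨h.1.symm, h.2.2.1, h.2.1, h.2.2.2.symm⟩

lemma IsNbr.notMem {v w : α} {F G : β} (h : D.IsNbr v F w G) : F ∉ D.Fs w := by
  obtain ⟨h1, h2, h3, h4⟩ := h
  intro hF
  have hFG : F = G := by
    by_contra hne
    have : F ∈ (D.Fs w).erase G := Finset.mem_erase.2 ⟨hne, hF⟩
    rw [h4] at this
    exact Finset.notMem_erase F _ this
  subst hFG
  apply h1
  apply D.Fs_inj
  rw [← Finset.insert_erase h3, h4, Finset.insert_erase h2]

lemma IsNbr.mem_of_mem_erase {v w : α} {F G H : β} (h : D.IsNbr v F w G)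
    (hH : H ∈ (D.Fs v).erase F) : H ∈ D.Fs w := by
  rw [← h.2.2.2] at hH
  exact Finset.mem_of_mem_erase hH

lemma IsNbr.a_pos {v w : α} {F G : β} (h : D.IsNbr v F w G) : 0 < D.a F (D.p w) :=
  D.pos w F (D.Fs_sub v h.2.1) h.notMem

lemma IsNbr.pt {v w : α} {F G : β} (h : D.IsNbr v F w G) :
    D.p w = D.p v + D.a F (D.p w) • D.M v F := by
  conv_lhs => rw [D.expand_pt v (D.p w)]
  rw [← Finset.add_sum_erase _ _ h.2.1]
  rw [Finset.sum_eq_zero, add_zero]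
  intro H hH
  have : D.a H (D.p w) = 0 := D.zero w H (h.mem_of_mem_erase hH)
  rw [this, zero_smul]

/-- The two ends of an edge see it in opposite directions. -/
lemma IsNbr.dir {v w : α} {F G : β} (h : D.IsNbr v F w G) :
    ∃ k : ℝ, k < 0 ∧ D.M w G = k • D.M v F := by
  have h1 := h.pt
  have h2 := h.symm.pt
  have p1 := h.a_pos
  have p2 := h.symm.a_pos
  set s := D.a F (D.p w)
  set t := D.a G (D.p v)
  refine ⟨-(s / t), by have := div_pos p1 p2; linarith, ?_⟩
  have h3 : t • D.M w G = -(s • D.M v F) := by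
    have : s • D.M v F = D.p w - D.p v := eq_sub_of_add_eq' h1.symm
    rw [this]
    have : t • D.M w G = D.p v - D.p w := eq_sub_of_add_eq' h2.symm
    rw [this]; abel
  have : D.M w G = t⁻¹ • (t • D.M w G) := by rw [smul_smul, inv_mul_cancel₀ p2.ne', one_smul]
  rw [this, h3, smul_neg, smul_smul, neg_smul, div_eq_inv_mul]

/-- Corresponding edge directions at the two ends of an edge agree modulo the direction of
the edge. -/
lemma IsNbr.pair {v w : α} {F G H : β} (h : D.IsNbr v F w G) (hH : H ∈ (D.Fs v).erase F)
    {ξ : Fin n → ℝ} (hξ : D.M v F ⬝ᵥ ξ = 0) : D.M w H ⬝ᵥ ξ = D.M v H ⬝ᵥ ξ := by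
  conv_lhs => rw [D.expand v (D.M w H)]
  rw [← Finset.add_sum_erase _ _ h.2.1]
  have : ∑ K ∈ (D.Fs v).erase F, (D.M w H ⬝ᵥ D.u K) • D.M v K =
      ∑ K ∈ (D.Fs v).erase F, if H = K then D.M v K else 0 := by
    refine Finset.sum_congr rfl fun K hK => ?_
    rw [D.dual w H (h.mem_of_mem_erase hH) K (h.mem_of_mem_erase hK)]
    split_ifs <;> simp
  rw [this, Finset.sum_ite_eq, if_pos hH, add_dotProduct, smul_dotProduct, hξ]
  simp

lemma eq_of_p_eq {v w : α} (h : D.p v = D.p w) : v = w := by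
  have key : ∀ v w : α, D.p v = D.p w → D.Fs v ⊆ D.Fs w := by
    intro v w h F hF
    by_contra hn
    have h1 := D.zero v F hF
    have h2 := D.pos w F (D.Fs_sub v hF) hn
    rw [h] at h1
    linarith
  exact D.Fs_inj _ _ (Finset.Subset.antisymm (key v w h) (key w v h.symm))

lemma IsNbr.unique {v w w' : α} {F G G' : β} (h : D.IsNbr v F w G) (h' : D.IsNbr v F w' G') :
    w = w' := by
  have key : ∀ {w w' : α} {G G' : β}, D.IsNbr v F w G → D.IsNbr v F w' G' →
      D.a F (D.p w') ≤ D.a F (D.p w) := by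
    intro w w' G G' h h'
    have e1 : D.a G (D.p w) = 0 := D.zero w G h.2.2.1
    have e2 : 0 ≤ D.a G (D.p w') := D.a_nonneg w' (D.Fs_sub w h.2.2.1)
    have e3 := h.symm.a_pos
    have e4 := h.a_pos
    have lin : ∀ t : ℝ, D.a G (D.p v + t • D.M v F) =
        D.a G (D.p v) + t * (D.M v F ⬝ᵥ D.u G) := by
      intro t
      simp only [a, add_dotProduct, smul_dotProduct, smul_eq_mul]
      ring
    rw [h.pt, lin] at e1
    rw [h'.pt, lin] at e2
    by_contra hlt
    push Not at hlt
    have hB : D.M v F ⬝ᵥ D.u G < 0 := by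
      by_contra hB
      have := mul_nonneg e4.le (not_lt.1 hB)
      linarith
    nlinarith
  apply eq_of_p_eq (D := D)
  rw [h.pt, h'.pt, le_antisymm (key h' h) (key h h')]

end PolarData

/-! ### Polar decomposition -/

/-- The signed indicator of a half-line in terms of the sign of the direction `c`: `1[0 ≤ a]` if
`c < 0` and `-1[a < 0]` if `0 < c`. At `c = 0` it is the mean of the two, so that reversing `c`
always reverses the deviation from this mean. -/
def sg (c a : ℝ) : ℝ := (if 0 ≤ a then 1 else 0) - (1 + Real.sign c) / 2

lemma sg_neg {c a : ℝ} (hc : c < 0) : sg c a = if 0 ≤ a then 1 else 0 := by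
  simp [sg, Real.sign_of_neg hc]

lemma sg_pos {c a : ℝ} (hc : 0 < c) : sg c a = if 0 ≤ a then 0 else -1 := by
  rw [sg, Real.sign_of_pos hc]
  split_ifs <;> norm_num

lemma exists_generic {n : ℕ} {ι : Type*} [Finite ι] (d : ι → Fin n → ℝ) (hd : ∀ i, d i ≠ 0) :
    ∃ w : Fin n → ℝ, ∀ i, d i ⬝ᵥ w ≠ 0 := by
  obtain ⟨f, hf⟩ := Module.exists_dual_forall_apply_ne_zero (K := ℝ) d hd
  refine ⟨fun j => f (Pi.single j 1), fun i => ?_⟩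
  have : d i ⬝ᵥ (fun j => f (Pi.single j 1)) = f (d i) := by
    conv_rhs => rw [pi_eq_sum_univ' (d i)]
    simp [dotProduct, map_sum]
  rw [this]
  exact hf i

open Filter Topology in
lemma eventually_affine_ne (A B : ℝ) (hB : B ≠ 0) : ∀ᶠ t in 𝓝[>] (0 : ℝ), A + t * B ≠ 0 := by
  by_cases hA : A = 0
  · filter_upwards [self_mem_nhdsWithin] with t ht
    rw [hA, zero_add]
    exact mul_ne_zero (ne_of_gt ht) hB
  · have : Tendsto (fun t : ℝ => A + t * B) (𝓝[>] 0) (𝓝 A) := by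
      have h : Continuous fun t : ℝ => A + t * B := by fun_prop
      have := h.tendsto 0
      simp only [zero_mul, add_zero] at this
      exact this.mono_left nhdsWithin_le_nhds
    exact this.eventually_ne hA

namespace PolarData

variable {n : ℕ} {α β : Type*} [Fintype α] (D : PolarData n α β)

/-- The signed number of polarized vertex cones containing `x`: at each vertex the edge
directions on which `ξ` is positive are reversed. -/
def polar (ξ x : Fin n → ℝ) : ℝ := ∑ v, ∏ F ∈ D.Fs v, sg (D.M v F ⬝ᵥ ξ) (D.a F x)

/-- Wall crossing: at a functional `ξ₀` vanishing on at most one edge direction per vertex, the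
signed count does not change under perturbation, because the changes at the two ends of each edge
orthogonal to `ξ₀` cancel. -/
lemma polar_local (x ξ₀ ξ : Fin n → ℝ)
    (h1 : ∀ v, ∀ F ∈ D.Fs v, D.M v F ⬝ᵥ ξ₀ ≠ 0 →
      Real.sign (D.M v F ⬝ᵥ ξ) = Real.sign (D.M v F ⬝ᵥ ξ₀))
    (h2 : ∀ v, ∀ F ∈ D.Fs v, ∀ G ∈ D.Fs v, D.M v F ⬝ᵥ ξ₀ = 0 → D.M v G ⬝ᵥ ξ₀ = 0 → F = G) :
    D.polar ξ x = D.polar ξ₀ x := by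
  rw [← sub_eq_zero, polar, polar, ← Finset.sum_sub_distrib]
  have hN : ∀ v, ∃ w, ((∀ F ∈ D.Fs v, D.M v F ⬝ᵥ ξ₀ ≠ 0) → w = v) ∧
      (∀ F ∈ D.Fs v, D.M v F ⬝ᵥ ξ₀ = 0 → ∃ G, D.IsNbr v F w G) := by
    intro v
    by_cases hz : ∃ F ∈ D.Fs v, D.M v F ⬝ᵥ ξ₀ = 0
    · obtain ⟨F, hF, hF0⟩ := hz
      obtain ⟨w, hw, G, hG, he⟩ := D.nb v F hF
      refine ⟨w, fun h => absurd hF0 (h F hF), fun F' hF' hF'0 => ?_⟩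
      obtain rfl := h2 v F hF F' hF' hF0 hF'0
      exact ⟨G, hw, hF, hG, he⟩
    · push Not at hz
      exact ⟨v, fun _ => rfl, fun F hF h0 => absurd h0 (hz F hF)⟩
  choose N hN1 hN2 using hN
  have sgc : ∀ v, ∀ F ∈ D.Fs v, D.M v F ⬝ᵥ ξ₀ ≠ 0 →
      sg (D.M v F ⬝ᵥ ξ) (D.a F x) = sg (D.M v F ⬝ᵥ ξ₀) (D.a F x) := by
    intro v F hF hne
    rw [sg, sg, h1 v F hF hne]
  have diff0 : ∀ v, (∀ F ∈ D.Fs v, D.M v F ⬝ᵥ ξ₀ ≠ 0) →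
      ∏ F ∈ D.Fs v, sg (D.M v F ⬝ᵥ ξ) (D.a F x) -
        ∏ F ∈ D.Fs v, sg (D.M v F ⬝ᵥ ξ₀) (D.a F x) = 0 := by
    intro v hv
    rw [sub_eq_zero]
    exact Finset.prod_congr rfl fun F hF => sgc v F hF (hv F hF)
  have diff1 : ∀ v, ∀ F ∈ D.Fs v, D.M v F ⬝ᵥ ξ₀ = 0 →
      ∏ F ∈ D.Fs v, sg (D.M v F ⬝ᵥ ξ) (D.a F x) -
        ∏ F ∈ D.Fs v, sg (D.M v F ⬝ᵥ ξ₀) (D.a F x) =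
      -(Real.sign (D.M v F ⬝ᵥ ξ) / 2) *
        ∏ H ∈ (D.Fs v).erase F, sg (D.M v H ⬝ᵥ ξ₀) (D.a H x) := by
    intro v F hF h0
    rw [← Finset.mul_prod_erase _ _ hF, ← Finset.mul_prod_erase (D.Fs v) _ hF]
    have : ∏ H ∈ (D.Fs v).erase F, sg (D.M v H ⬝ᵥ ξ) (D.a H x) =
        ∏ H ∈ (D.Fs v).erase F, sg (D.M v H ⬝ᵥ ξ₀) (D.a H x) := by
      refine Finset.prod_congr rfl fun H hH => ?_
      refine sgc v H (Finset.mem_of_mem_erase hH) fun hH0 => ?_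
      exact Finset.ne_of_mem_erase hH (h2 v H (Finset.mem_of_mem_erase hH) F hF hH0 h0)
    rw [this, ← sub_mul, sg, sg, h0, Real.sign_zero]
    ring
  refine Finset.sum_involution (fun v _ => N v) ?_ ?_ (fun _ _ => Finset.mem_univ _) ?_
  · intro v _
    by_cases hz : ∃ F ∈ D.Fs v, D.M v F ⬝ᵥ ξ₀ = 0
    · obtain ⟨F, hF, hF0⟩ := hz
      obtain ⟨G, hG⟩ := hN2 v F hF hF0
      obtain ⟨k, hk, hkM⟩ := hG.dir
      have hG0 : D.M (N v) G ⬝ᵥ ξ₀ = 0 := by rw [hkM, smul_dotProduct, hF0, smul_zero]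
      rw [diff1 v F hF hF0, diff1 (N v) G hG.2.2.1 hG0]
      have e1 : Real.sign (D.M (N v) G ⬝ᵥ ξ) = - Real.sign (D.M v F ⬝ᵥ ξ) := by
        rw [hkM, smul_dotProduct, smul_eq_mul]
        rcases lt_trichotomy (D.M v F ⬝ᵥ ξ) 0 with h | h | h
        · rw [Real.sign_of_neg h, Real.sign_of_pos (mul_pos_of_neg_of_neg hk h), neg_neg]
        · simp [h]
        · rw [Real.sign_of_pos h, Real.sign_of_neg (mul_neg_of_neg_of_pos hk h)]
      have e2 : ∏ H ∈ (D.Fs (N v)).erase G, sg (D.M (N v) H ⬝ᵥ ξ₀) (D.a H x) =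
          ∏ H ∈ (D.Fs v).erase F, sg (D.M v H ⬝ᵥ ξ₀) (D.a H x) := by
        rw [hG.2.2.2]
        exact Finset.prod_congr rfl fun H hH => by rw [hG.pair hH hF0]
      rw [e1, e2]
      ring
    · push Not at hz
      rw [hN1 v hz, diff0 v hz, add_zero]
  · intro v _ hne heq
    by_cases hz : ∃ F ∈ D.Fs v, D.M v F ⬝ᵥ ξ₀ = 0
    · obtain ⟨F, hF, hF0⟩ := hz
      obtain ⟨G, hG⟩ := hN2 v F hF hF0
      exact hG.1 heq
    · push Not at hz
      exact hne (diff0 v hz)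
  · intro v _
    by_cases hz : ∃ F ∈ D.Fs v, D.M v F ⬝ᵥ ξ₀ = 0
    · obtain ⟨F, hF, hF0⟩ := hz
      obtain ⟨G, hG⟩ := hN2 v F hF hF0
      obtain ⟨k, hk, hkM⟩ := hG.dir
      have hG0 : D.M (N v) G ⬝ᵥ ξ₀ = 0 := by rw [hkM, smul_dotProduct, hF0, smul_zero]
      obtain ⟨G', hG'⟩ := hN2 (N v) G hG.2.2.1 hG0
      exact hG'.unique hG.symm
    · push Not at hz
      simp only [hN1 v hz]

open Filter Topology in
/-- The signed count takes the same value at the ends of a segment none of whose points is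
orthogonal to two edge directions at one vertex. -/
lemma polar_segment (x ξ η : Fin n → ℝ)
    (h : ∀ v, ∀ F ∈ D.Fs v, ∀ G ∈ D.Fs v, F ≠ G →
      (D.M v F ⬝ᵥ ξ) * (D.M v G ⬝ᵥ η) ≠ (D.M v G ⬝ᵥ ξ) * (D.M v F ⬝ᵥ η)) :
    D.polar ξ x = D.polar η x := by
  have lc : IsLocallyConstant fun t : ℝ => D.polar ((1 - t) • ξ + t • η) x := by
    rw [IsLocallyConstant.iff_eventually_eq]
    intro t₀
    have ev : ∀ᶠ t in 𝓝 t₀, ∀ v, ∀ F ∈ D.Fs v, D.M v F ⬝ᵥ ((1 - t₀) • ξ + t₀ • η) ≠ 0 →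
        Real.sign (D.M v F ⬝ᵥ ((1 - t) • ξ + t • η)) =
          Real.sign (D.M v F ⬝ᵥ ((1 - t₀) • ξ + t₀ • η)) := by
      rw [eventually_all]
      intro v
      rw [Filter.eventually_all_finset]
      intro F hF
      have hc : Continuous fun t : ℝ => D.M v F ⬝ᵥ ((1 - t) • ξ + t • η) := by
        simp only [dotProduct_add, dotProduct_smul]
        fun_prop
      by_cases h0 : D.M v F ⬝ᵥ ((1 - t₀) • ξ + t₀ • η) = 0
      · exact Eventually.of_forall fun t hne => absurd h0 hne
      rcases lt_or_gt_of_ne h0 with hlt | hgt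
      · filter_upwards [hc.continuousAt.eventually_lt continuousAt_const hlt] with t ht _
        rw [Real.sign_of_neg ht, Real.sign_of_neg hlt]
      · filter_upwards [continuousAt_const.eventually_lt hc.continuousAt hgt] with t ht _
        rw [Real.sign_of_pos ht, Real.sign_of_pos hgt]
    filter_upwards [ev] with t ht
    refine D.polar_local x _ _ ht ?_
    intro v F hF G hG h1 h2
    by_contra hne
    apply h v F hF G hG hne
    simp only [dotProduct_add, dotProduct_smul, smul_eq_mul] at h1 h2
    by_cases ht : t₀ = 0
    · subst ht
      simp only [sub_zero, one_mul, zero_mul, add_zero] at h1 h2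
      rw [h1, h2]; ring
    · have : t₀ * ((D.M v F ⬝ᵥ ξ) * (D.M v G ⬝ᵥ η) - (D.M v G ⬝ᵥ ξ) * (D.M v F ⬝ᵥ η)) = 0 := by
        linear_combination (D.M v F ⬝ᵥ ξ) * h2 - (D.M v G ⬝ᵥ ξ) * h1
      exact sub_eq_zero.1 ((mul_eq_zero.1 this).resolve_left ht)
  have := lc.apply_eq_of_isPreconnected isPreconnected_univ (Set.mem_univ 0) (Set.mem_univ 1)
  simpa using this

/-- On the polytope the signed count is `1`: only the cone at the vertex maximizing `ξ`
contributes. -/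
lemma polar_of_mem [Nonempty α] (ξ x : Fin n → ℝ)
    (hξ : ∀ v, ∀ F ∈ D.Fs v, D.M v F ⬝ᵥ ξ ≠ 0) (hx : ∀ F ∈ D.T, 0 ≤ D.a F x) :
    D.polar ξ x = 1 := by
  have term : ∀ v, ∏ F ∈ D.Fs v, sg (D.M v F ⬝ᵥ ξ) (D.a F x) =
      if ∀ F ∈ D.Fs v, D.M v F ⬝ᵥ ξ < 0 then 1 else 0 := by
    intro v
    split_ifs with h
    · refine Finset.prod_eq_one fun F hF => ?_
      rw [sg_neg (h F hF), if_pos (hx F (D.Fs_sub v hF))]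
    · push Not at h
      obtain ⟨F, hF, h⟩ := h
      refine Finset.prod_eq_zero hF ?_
      rw [sg_pos (lt_of_le_of_ne h (hξ v F hF).symm), if_pos (hx F (D.Fs_sub v hF))]
  obtain ⟨v, -, hv⟩ := Finset.exists_max_image Finset.univ (fun v => D.p v ⬝ᵥ ξ)
    Finset.univ_nonempty
  have hvneg : ∀ F ∈ D.Fs v, D.M v F ⬝ᵥ ξ < 0 := by
    intro F hF
    by_contra hn
    have hp : 0 < D.M v F ⬝ᵥ ξ := lt_of_le_of_ne (not_lt.1 hn) (hξ v F hF).symm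
    obtain ⟨w, hw, G, hG, he⟩ := D.nb v F hF
    have hN : D.IsNbr v F w G := ⟨hw, hF, hG, he⟩
    have h1 := hv w (Finset.mem_univ _)
    rw [hN.pt, add_dotProduct, smul_dotProduct, smul_eq_mul] at h1
    have := mul_pos hN.a_pos hp
    linarith
  have huniq : ∀ w, (∀ F ∈ D.Fs w, D.M w F ⬝ᵥ ξ < 0) → w = v := by
    intro w hw
    have h1 := congrArg (· ⬝ᵥ ξ) (D.expand_pt w (D.p v))
    simp only [add_dotProduct, sum_dotProduct, smul_dotProduct, smul_eq_mul] at h1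
    have h2 := hv w (Finset.mem_univ _)
    have h3 : ∀ F ∈ D.Fs w, D.a F (D.p v) * (D.M w F ⬝ᵥ ξ) ≤ 0 := fun F hF =>
      mul_nonpos_of_nonneg_of_nonpos (D.a_nonneg v (D.Fs_sub w hF)) (hw F hF).le
    have h4 : ∑ F ∈ D.Fs w, D.a F (D.p v) * (D.M w F ⬝ᵥ ξ) = 0 :=
      le_antisymm (Finset.sum_nonpos h3) (by linarith)
    rw [Finset.sum_eq_zero_iff_of_nonpos h3] at h4
    have h5 := D.expand_pt w (D.p v)
    rw [Finset.sum_eq_zero, add_zero] at h5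
    · exact eq_of_p_eq h5.symm
    · intro F hF
      rw [(mul_eq_zero.1 (h4 F hF)).resolve_right (hw F hF).ne, zero_smul]
  rw [polar, Finset.sum_congr rfl fun v _ => term v, Finset.sum_eq_single v]
  · rw [if_pos hvneg]
  · intro w _ hne
    rw [if_neg fun hw => hne (huniq w hw)]
  · exact fun h => absurd (Finset.mem_univ v) h

/-- The signed count vanishes if the hyperplane orthogonal to `ξ` through `x` strictly separates
`x` from the vertices. -/
lemma polar_of_lt (ξ x : Fin n → ℝ)
    (hξ : ∀ v, ∀ F ∈ D.Fs v, D.M v F ⬝ᵥ ξ ≠ 0) (hx : ∀ v, D.p v ⬝ᵥ ξ < x ⬝ᵥ ξ) :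
    D.polar ξ x = 0 := by
  refine Finset.sum_eq_zero fun v _ => ?_
  rw [Finset.prod_eq_zero_iff]
  by_contra hne
  push Not at hne
  have h1 := congrArg (· ⬝ᵥ ξ) (D.expand_pt v x)
  simp only [add_dotProduct, sum_dotProduct, smul_dotProduct, smul_eq_mul] at h1
  have h3 : ∑ F ∈ D.Fs v, D.a F x * (D.M v F ⬝ᵥ ξ) ≤ 0 := by
    refine Finset.sum_nonpos fun F hF => ?_
    have h4 := hne F hF
    rcases lt_or_gt_of_ne (hξ v F hF) with hlt | hgt
    · rw [sg_neg hlt] at h4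
      have : 0 ≤ D.a F x := by by_contra h; exact h4 (if_neg h)
      exact mul_nonpos_of_nonneg_of_nonpos this hlt.le
    · rw [sg_pos hgt] at h4
      have : ¬ 0 ≤ D.a F x := fun h => h4 (if_pos h)
      exact mul_nonpos_of_nonpos_of_nonneg (not_le.1 this).le hgt.le
  have := hx v
  linarith

open Filter Topology in
/-- The polarized vertex cones of a simple polytope add up, with signs, to its indicator
function. -/
theorem polar_eq [Nonempty α] (ξ x : Fin n → ℝ)
    (hξ : ∀ v, ∀ F ∈ D.Fs v, D.M v F ⬝ᵥ ξ ≠ 0) :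
    D.polar ξ x = if ∀ F ∈ D.T, 0 ≤ D.a F x then 1 else 0 := by
  split_ifs with hx
  · exact D.polar_of_mem ξ x hξ hx
  push Not at hx
  obtain ⟨K, hK, hxK⟩ := hx
  -- The directions that the separating functional must not annihilate.
  let d1 : (Σ v : α, {F // F ∈ D.Fs v}) → Fin n → ℝ := fun i => D.M i.1 i.2
  let d2 : (Σ v : α, {FG : {F // F ∈ D.Fs v} × {F // F ∈ D.Fs v} // FG.1 ≠ FG.2}) →
      Fin n → ℝ := fun i => (D.M i.1 i.2.1.1 ⬝ᵥ ξ) • D.M i.1 i.2.1.2 -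
        (D.M i.1 i.2.1.2 ⬝ᵥ ξ) • D.M i.1 i.2.1.1
  have hd : ∀ i, Sum.elim d1 d2 i ≠ 0 := by
    rintro (⟨v, F, hF⟩ | ⟨v, ⟨⟨F, hF⟩, ⟨G, hG⟩⟩, hne⟩)
    · exact D.M_ne_zero v hF
    · intro h0
      simp only [ne_eq, Subtype.mk.injEq] at hne
      have := congrArg (· ⬝ᵥ D.u G) h0
      simp only [Sum.elim_inr, d2, sub_dotProduct, smul_dotProduct, zero_dotProduct,
        D.dual v G hG G hG, D.dual v F hF G hG, if_neg hne, if_true, smul_eq_mul] at this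
      exact hξ v F hF (by linarith)
  obtain ⟨w, hw⟩ := exists_generic _ hd
  have ev1 : ∀ᶠ t in 𝓝[>] (0 : ℝ), ∀ i, Sum.elim d1 d2 i ⬝ᵥ (-D.u K + t • w) ≠ 0 := by
    rw [eventually_all]
    intro i
    simp only [dotProduct_add, dotProduct_smul, smul_eq_mul]
    exact eventually_affine_ne _ _ (hw i)
  have ev2 : ∀ᶠ t in 𝓝[>] (0 : ℝ), ∀ v, D.p v ⬝ᵥ (-D.u K + t • w) <
      x ⬝ᵥ (-D.u K + t • w) := by
    rw [eventually_all]
    intro v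
    refine Filter.Eventually.filter_mono nhdsWithin_le_nhds ?_
    simp only [dotProduct_add, dotProduct_smul]
    refine ContinuousAt.eventually_lt (by fun_prop) (by fun_prop) ?_
    have := D.a_nonneg v hK
    simp only [a, dotProduct_neg, zero_smul, add_zero] at this hxK ⊢
    linarith
  obtain ⟨t, ht1, ht2⟩ := (ev1.and ev2).exists
  rw [D.polar_segment x ξ (-D.u K + t • w), D.polar_of_lt _ _ _ ht2]
  · exact fun v F hF => ht1 (Sum.inl ⟨v, F, hF⟩)
  · intro v F hF G hG hne h
    refine ht1 (Sum.inr ⟨v, ⟨⟨F, hF⟩, ⟨G, hG⟩⟩, by simpa using hne⟩) ?_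
    simp only [Sum.elim_inr, d2, sub_dotProduct, smul_dotProduct, smul_eq_mul]
    linarith

end PolarData

/-! ### Integrals of exponentials -/

lemma sg_exp_integral {ζ : ℂ} (hζ : ζ.re ≠ 0) :
    Integrable (fun s : ℝ => (sg ζ.re s : ℂ) * Complex.exp (s * ζ)) ∧
      ∫ s : ℝ, (sg ζ.re s : ℂ) * Complex.exp (s * ζ) = -ζ⁻¹ := by
  rcases lt_or_gt_of_ne hζ with h | h
  · have e : (fun s : ℝ => (sg ζ.re s : ℂ) * Complex.exp (s * ζ)) =
        (Set.Ici (0 : ℝ)).indicator fun s => Complex.exp (ζ * s) := by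
      ext s
      rw [sg_neg h, mul_comm (s : ℂ)]
      by_cases hs : 0 ≤ s <;> simp [Set.indicator, hs]
    rw [e, integrable_indicator_iff measurableSet_Ici, integral_indicator measurableSet_Ici,
      integrableOn_Ici_iff_integrableOn_Ioi, integral_Ici_eq_integral_Ioi,
      integral_exp_mul_complex_Ioi h]
    exact ⟨integrableOn_exp_mul_complex_Ioi h 0, by simp [neg_div]⟩
  · have e : (fun s : ℝ => (sg ζ.re s : ℂ) * Complex.exp (s * ζ)) =
        (Set.Iio (0 : ℝ)).indicator fun s => -Complex.exp (ζ * s) := by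
      ext s
      rw [sg_pos h, mul_comm (s : ℂ)]
      by_cases hs : 0 ≤ s
      · simp [Set.indicator, hs]
      · simp [Set.indicator, hs, not_le.1 hs]
    rw [e, integrable_indicator_iff measurableSet_Iio, integral_indicator measurableSet_Iio,
      integral_neg, ← integral_Iic_eq_integral_Iio, integral_exp_mul_complex_Iic h]
    exact ⟨((integrableOn_exp_mul_complex_Iic h 0).mono_set Set.Iio_subset_Iic_self).neg,
      by simp⟩

/-- The integral of an exponential over a polarized simplicial cone with apex `p`, edge directions
`m j` and facet normals `u j`. -/
lemma cone_integral {n : ℕ} (m u : Fin n → Fin n → ℝ)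
    (hm : ∀ j k, m j ⬝ᵥ u k = if j = k then 1 else 0)
    (hexp : ∀ d : Fin n → ℝ, d = ∑ j, (d ⬝ᵥ u j) • m j)
    (p : Fin n → ℝ) (z : Fin n → ℂ) (hz : ∀ j, (cpair (m j) z).re ≠ 0) :
    Integrable (fun x : Fin n → ℝ =>
        (∏ j, (sg (cpair (m j) z).re ((x - p) ⬝ᵥ u j) : ℂ)) * Complex.exp (cpair x z)) ∧
      ∫ x : Fin n → ℝ,
        (∏ j, (sg (cpair (m j) z).re ((x - p) ⬝ᵥ u j) : ℂ)) * Complex.exp (cpair x z) =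
      Complex.exp (cpair p z) * (|(Matrix.of m).det| : ℝ) * ∏ j, -(cpair (m j) z)⁻¹ := by
  set f : (Fin n → ℝ) → ℂ := fun s =>
    ∏ j, ((sg (cpair (m j) z).re (s j) : ℂ) * Complex.exp (s j * cpair (m j) z)) with hf
  have hfi : Integrable f :=
    Integrable.fintype_prod fun j => (sg_exp_integral (hz j)).1
  have hfint : ∫ s, f s = ∏ j, -(cpair (m j) z)⁻¹ := by
    rw [hf, integral_fintype_prod_volume_eq_prod
      (fun j (s : ℝ) => (sg (cpair (m j) z).re s : ℂ) * Complex.exp (s * cpair (m j) z))]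
    exact Finset.prod_congr rfl fun j _ => (sg_exp_integral (hz j)).2
  have hdet : (Matrix.of m).det * (Matrix.of u).det = 1 := by
    rw [← Matrix.det_transpose (Matrix.of u), ← Matrix.det_mul]
    have : Matrix.of m * (Matrix.of u).transpose = 1 := by
      ext j k
      rw [Matrix.mul_apply, Matrix.one_apply, ← hm j k]
      rfl
    rw [this, Matrix.det_one]
  have hu0 : (Matrix.of u).det ≠ 0 := right_ne_zero_of_mul_eq_one hdet
  have hmap := Real.map_matrix_volume_pi_eq_smul_volume_pi hu0
  rw [inv_eq_of_mul_eq_one_left hdet] at hmap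
  set L := Matrix.toLin' (Matrix.of u) with hL
  have hLa : ∀ x j, L x j = x ⬝ᵥ u j := by
    intro x j
    rw [hL, Matrix.toLin'_apply, dotProduct_comm]
    rfl
  have hLm : Measurable L := (LinearMap.continuous_of_finiteDimensional L).measurable
  have hfi' : Integrable f (Measure.map L volume) := by
    rw [hmap]
    exact hfi.smul_measure ENNReal.ofReal_ne_top
  have hi2 : Integrable (fun x => f (L x)) := hfi'.comp_measurable hLm
  have hint2 : ∫ x, f (L x) = (|(Matrix.of m).det| : ℝ) * ∏ j, -(cpair (m j) z)⁻¹ := by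
    rw [← integral_map hLm.aemeasurable hfi'.aestronglyMeasurable, hmap, integral_smul_measure,
      hfint, ENNReal.toReal_ofReal (abs_nonneg _), Complex.real_smul]
  have hfun : (fun x : Fin n → ℝ =>
        (∏ j, (sg (cpair (m j) z).re ((x - p) ⬝ᵥ u j) : ℂ)) * Complex.exp (cpair x z)) =
      fun x => Complex.exp (cpair p z) * f (L (x - p)) := by
    ext x
    have hx : cpair x z = cpair p z + ∑ j, (((x - p) ⬝ᵥ u j : ℝ) : ℂ) * cpair (m j) z := by
      have h1 : cpair x z = cpair p z + cpair (x - p) z := by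
        simp only [cpair, ← Finset.sum_add_distrib]
        exact Finset.sum_congr rfl fun i _ => by simp; ring
      rw [h1]
      conv_lhs => rw [hexp (x - p)]
      simp only [cpair, Finset.sum_apply, Pi.smul_apply, smul_eq_mul, Complex.ofReal_sum,
        Complex.ofReal_mul, Finset.sum_mul, Finset.mul_sum]
      rw [Finset.sum_comm]
      simp only [mul_assoc]
    rw [hx, Complex.exp_add, Complex.exp_sum, hf]
    simp only [hLa]
    rw [Finset.prod_mul_distrib]
    ring
  rw [hfun]
  refine ⟨(hi2.comp_sub_right p).const_mul _, ?_⟩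
  rw [integral_const_mul, integral_sub_right_eq_self (fun x => f (L x)), hint2, mul_assoc]

namespace PolarData

variable {n : ℕ} {α β : Type*} (D : PolarData n α β)

/-- The polytope described by the data. -/
def body : Set (Fin n → ℝ) := {x | ∀ F ∈ D.T, 0 ≤ D.a F x}

lemma measurableSet_body : MeasurableSet D.body := by
  have : IsClosed D.body := by
    simp only [body, Set.ofPred_forall]
    refine isClosed_biInter fun F _ => isClosed_le continuous_const ?_
    unfold a dotProduct
    fun_prop
  exact this.measurableSet

/-- The right-hand side of the exponential integral formula. -/
def vertexSum [Fintype α] (Fv : α → Fin n → β) (z : Fin n → ℂ) : ℂ :=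
  ∑ v, Complex.exp (cpair (D.p v) z) * (|(Matrix.of fun j => D.M v (Fv v j)).det| : ℝ) *
    ∏ j, -(cpair (D.M v (Fv v j)) z)⁻¹

lemma cpair_re {n : ℕ} (x : Fin n → ℝ) (z : Fin n → ℂ) :
    (cpair x z).re = x ⬝ᵥ fun i => (z i).re := by
  simp [cpair, dotProduct]

/-- The formula for functionals whose real part is orthogonal to no edge. -/
lemma integral_body_generic [Fintype α] [Nonempty α] (Fv : α → Fin n → β)
    (hinj : ∀ v, Function.Injective (Fv v)) (hFs : ∀ v, D.Fs v = Finset.univ.image (Fv v))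
    (z : Fin n → ℂ) (hz : ∀ v j, (cpair (D.M v (Fv v j)) z).re ≠ 0) :
    IntegrableOn (fun x => Complex.exp (cpair x z)) D.body ∧
      ∫ x in D.body, Complex.exp (cpair x z) = D.vertexSum Fv z := by
  set ξ : Fin n → ℝ := fun i => (z i).re with hξ
  have hmem : ∀ v j, Fv v j ∈ D.Fs v := fun v j => by simp [hFs]
  have hgen : ∀ v, ∀ F ∈ D.Fs v, D.M v F ⬝ᵥ ξ ≠ 0 := by
    intro v F hF
    rw [hFs] at hF
    obtain ⟨j, -, rfl⟩ := Finset.mem_image.1 hF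
    rw [hξ, ← cpair_re]
    exact hz v j
  have hcone := fun v => cone_integral (fun j => D.M v (Fv v j)) (fun j => D.u (Fv v j))
    (fun j k => by
      rw [D.dual v _ (hmem v j) _ (hmem v k)]
      simp [(hinj v).eq_iff])
    (fun d => by
      conv_lhs => rw [D.expand v d, hFs, Finset.sum_image fun _ _ _ _ h => hinj v h])
    (D.p v) z (hz v)
  have hfun : D.body.indicator (fun x => Complex.exp (cpair x z)) = fun x =>
      ∑ v, (∏ j, (sg (cpair (D.M v (Fv v j)) z).re ((x - D.p v) ⬝ᵥ D.u (Fv v j)) : ℂ)) *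
        Complex.exp (cpair x z) := by
    ext x
    rw [← Finset.sum_mul]
    have h1 : ∑ v, (∏ j, (sg (cpair (D.M v (Fv v j)) z).re
        ((x - D.p v) ⬝ᵥ D.u (Fv v j)) : ℂ)) = (D.polar ξ x : ℂ) := by
      simp only [polar, Complex.ofReal_sum, Complex.ofReal_prod]
      refine Finset.sum_congr rfl fun v _ => ?_
      rw [hFs, Finset.prod_image fun _ _ _ _ h => hinj v h]
      refine Finset.prod_congr rfl fun j _ => ?_
      rw [cpair_re]
      congr 2
      have := D.zero v _ (hmem v j)
      rw [sub_dotProduct, a]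
      linarith
    rw [h1, D.polar_eq ξ x hgen]
    by_cases hx : x ∈ D.body
    · rw [Set.indicator_of_mem hx, if_pos (show ∀ F ∈ D.T, 0 ≤ D.a F x from hx)]; simp
    · rw [Set.indicator_of_notMem hx, if_neg (show ¬ ∀ F ∈ D.T, 0 ≤ D.a F x from hx)]; simp
  rw [← integrable_indicator_iff D.measurableSet_body,
    ← integral_indicator D.measurableSet_body, hfun]
  refine ⟨integrable_finsetSum _ fun v _ => (hcone v).1, ?_⟩
  rw [integral_finsetSum _ fun v _ => (hcone v).1]
  exact Finset.sum_congr rfl fun v _ => (hcone v).2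

open Filter Topology in
/-- The exponential integral of a simple polytope. A functional whose real part is orthogonal to
some edge is a limit of generic ones `z + t w` with `w` real; near `t = 0` the integrands are
dominated by the sum of the integrands at `t = t₀` and `t = -t₀`. -/
theorem integral_body [Fintype α] [Nonempty α] (Fv : α → Fin n → β)
    (hinj : ∀ v, Function.Injective (Fv v)) (hFs : ∀ v, D.Fs v = Finset.univ.image (Fv v))
    (z : Fin n → ℂ) (hz : ∀ v j, cpair (D.M v (Fv v j)) z ≠ 0) :
    ∫ x in D.body, Complex.exp (cpair x z) = D.vertexSum Fv z := by
  have hmem : ∀ v j, Fv v j ∈ D.Fs v := fun v j => by simp [hFs]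
  obtain ⟨w, hw⟩ := exists_generic (fun i : α × Fin n => D.M i.1 (Fv i.1 i.2))
    (fun i => D.M_ne_zero i.1 (hmem i.1 i.2))
  let Z : ℝ → Fin n → ℂ := fun t i => z i + t * w i
  have hZ : ∀ (t : ℝ) (x : Fin n → ℝ), cpair x (Z t) = cpair x z + t * (x ⬝ᵥ w : ℝ) := by
    intro t x
    simp only [cpair, Z, dotProduct, Complex.ofReal_sum, Finset.mul_sum,
      ← Finset.sum_add_distrib]
    exact Finset.sum_congr rfl fun i _ => by push_cast; ring
  have hre : ∀ (t : ℝ) (x : Fin n → ℝ), (cpair x (Z t)).re = (cpair x z).re + t * (x ⬝ᵥ w) := by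
    intro t x
    rw [hZ]
    simp
  have ev1 : ∀ᶠ t in 𝓝[>] (0 : ℝ), ∀ v j, (cpair (D.M v (Fv v j)) (Z t)).re ≠ 0 := by
    simp only [eventually_all, hre]
    exact fun v j => eventually_affine_ne _ _ (hw (v, j))
  have ev2 : ∀ᶠ t in 𝓝[>] (0 : ℝ), ∀ v j, (cpair (D.M v (Fv v j)) (Z (-t))).re ≠ 0 := by
    simp only [eventually_all, hre, neg_mul, ← mul_neg]
    exact fun v j => eventually_affine_ne _ _ (neg_ne_zero.2 (hw (v, j)))
  obtain ⟨t₀, ⟨h1, h2⟩, ht₀⟩ := ((ev1.and ev2).and self_mem_nhdsWithin).exists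
  have ht₀' : 0 < t₀ := ht₀
  have lim1 : Tendsto (fun t => ∫ x in D.body, Complex.exp (cpair x (Z t))) (𝓝[>] 0)
      (𝓝 (∫ x in D.body, Complex.exp (cpair x z))) := by
    refine tendsto_integral_filter_of_dominated_convergence
      (fun x => ‖Complex.exp (cpair x (Z t₀))‖ + ‖Complex.exp (cpair x (Z (-t₀)))‖)
      (Eventually.of_forall fun t => ?_) ?_ ?_ (Eventually.of_forall fun x => ?_)
    · refine Continuous.aestronglyMeasurable ?_
      unfold cpair
      fun_prop
    · filter_upwards [Ioo_mem_nhdsGT ht₀'] with t ht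
      refine Eventually.of_forall fun x => ?_
      simp only [Complex.norm_exp, hre]
      rcases le_total 0 (x ⬝ᵥ w) with hs | hs
      · have : Real.exp ((cpair x z).re + t * (x ⬝ᵥ w)) ≤
            Real.exp ((cpair x z).re + t₀ * (x ⬝ᵥ w)) := by
          gcongr
          exact ht.2.le
        linarith [Real.exp_pos ((cpair x z).re + -t₀ * (x ⬝ᵥ w))]
      · have : Real.exp ((cpair x z).re + t * (x ⬝ᵥ w)) ≤
            Real.exp ((cpair x z).re + -t₀ * (x ⬝ᵥ w)) := by
          apply Real.exp_le_exp.2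
          nlinarith [ht.1, ht.2]
        linarith [Real.exp_pos ((cpair x z).re + t₀ * (x ⬝ᵥ w))]
    · exact (D.integral_body_generic Fv hinj hFs _ h1).1.norm.add
        (D.integral_body_generic Fv hinj hFs _ h2).1.norm
    · have hc : Continuous fun t : ℝ => Complex.exp (cpair x (Z t)) := by
        simp only [hZ]
        fun_prop
      have := hc.tendsto 0
      simp only [hZ, Complex.ofReal_zero, zero_mul, add_zero] at this
      simp only [hZ]
      exact this.mono_left nhdsWithin_le_nhds
  have lim2 : Tendsto (fun t => D.vertexSum Fv (Z t)) (𝓝[>] 0) (𝓝 (D.vertexSum Fv z)) := by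
    have hc : ContinuousAt (fun t : ℝ => D.vertexSum Fv (Z t)) 0 := by
      simp only [vertexSum, hZ]
      refine tendsto_finsetSum _ fun v _ => ?_
      refine Tendsto.mul (ContinuousAt.tendsto (by fun_prop)) (tendsto_finsetProd _ fun j _ => ?_)
      refine ContinuousAt.tendsto ?_
      refine ContinuousAt.neg (ContinuousAt.inv₀ (by fun_prop) ?_)
      simpa using hz v j
    have h0 : Z 0 = z := by ext i; simp [Z]
    have := hc.tendsto
    rw [h0] at this
    exact this.mono_left nhdsWithin_le_nhds
  refine tendsto_nhds_unique (lim1.congr' ?_) lim2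
  filter_upwards [ev1] with t ht
  exact (D.integral_body_generic Fv hinj hFs _ ht).2

end PolarData

/-! ### Lattice index and vertices of a polytope -/

lemma card_quotient_span {n : ℕ} (w : Fin n → Fin n → ℤ) (hw : (Matrix.of w).det ≠ 0) :
    Nat.card ((Fin n → ℤ) ⧸ Submodule.span ℤ (Set.range w)) = (Matrix.of w).det.natAbs := by
  have hli : LinearIndependent ℤ w := Matrix.linearIndependent_rows_of_det_ne_zero hw
  have h := Submodule.natAbs_det_basis_change (Pi.basisFun ℤ (Fin n))
    (Submodule.span ℤ (Set.range w)) (Module.Basis.span hli)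
  rw [← h, Pi.basisFun_det_apply]
  congr 2
  ext i j
  simp [Module.Basis.span_apply]

/-- The index of the lattice spanned by the normals is the inverse absolute determinant of the dual
basis. -/
lemma abs_det_eq_inv_card {n : ℕ} (w : Fin n → Fin n → ℤ) (m : Fin n → Fin n → ℝ)
    (hm : ∀ j k, m j ⬝ᵥ intVec (w k) = if j = k then 1 else 0) :
    |(Matrix.of m).det| =
      ((Nat.card ((Fin n → ℤ) ⧸ Submodule.span ℤ (Set.range w)) : ℕ) : ℝ)⁻¹ := by
  have hdet : (Matrix.of m).det * ((Matrix.of w).det : ℝ) = 1 := by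
    have e : ((Matrix.of w).det : ℝ) = (Matrix.of fun k => intVec (w k)).det := by
      exact (Int.castRingHom ℝ).map_det (Matrix.of w)
    rw [e, ← Matrix.det_transpose (Matrix.of fun k => intVec (w k)), ← Matrix.det_mul]
    have : Matrix.of m * (Matrix.of fun k => intVec (w k)).transpose = 1 := by
      ext j k
      rw [Matrix.mul_apply, Matrix.one_apply, ← hm j k]
      rfl
    rw [this, Matrix.det_one]
  have hw : (Matrix.of w).det ≠ 0 := by
    intro h
    rw [h] at hdet
    simp at hdet
  rw [card_quotient_span w hw, Nat.cast_natAbs, Int.cast_abs, ← abs_inv,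
    eq_inv_of_mul_eq_one_left hdet]

lemma expand_of_dual {n : ℕ} (m u : Fin n → Fin n → ℝ)
    (hm : ∀ j k, m j ⬝ᵥ u k = if j = k then 1 else 0) (d : Fin n → ℝ) :
    d = ∑ j, (d ⬝ᵥ u j) • m j := by
  have h1 : Matrix.of m * (Matrix.of u).transpose = 1 := by
    ext j k
    rw [Matrix.mul_apply, Matrix.one_apply, ← hm j k]
    rfl
  have h2 := mul_eq_one_comm.1 h1
  have h3 : Matrix.vecMul (Matrix.vecMul d (Matrix.of u).transpose) (Matrix.of m) = d := by
    rw [Matrix.vecMul_vecMul, h2, Matrix.vecMul_one]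
  conv_lhs => rw [← h3]
  ext i
  simp [Matrix.vecMul, dotProduct]

/-- The linear functional `x ↦ ⟨x, c⟩`. -/
def dotLin {n : ℕ} (c : Fin n → ℝ) : (Fin n → ℝ) →ₗ[ℝ] ℝ where
  toFun x := x ⬝ᵥ c
  map_add' x y := add_dotProduct x y c
  map_smul' r x := smul_dotProduct r x c

lemma mem_of_isFaceOf {n : ℕ} {P : Set (Fin n → ℝ)} {x : Fin n → ℝ} (h : IsFaceOf P {x}) :
    x ∈ P := by
  rcases h with h | ⟨-, u, h⟩
  · exact h ▸ rfl
  · have : x ∈ ({x} : Set (Fin n → ℝ)) := rfl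
    rw [h] at this
    exact this.1

/-- A nonempty compact set has a vertex: a point farthest from the origin is exposed. -/
lemma exists_vertex {n : ℕ} {P : Set (Fin n → ℝ)} (hc : IsCompact P) (hne : P.Nonempty) :
    ∃ x, IsFaceOf P {x} := by
  obtain ⟨x, hx, hmax⟩ := hc.exists_isMaxOn hne
    (f := fun y : Fin n → ℝ => y ⬝ᵥ y) (by unfold dotProduct; fun_prop)
  have expand : ∀ p : Fin n → ℝ, (x - p) ⬝ᵥ (x - p) = x ⬝ᵥ x - 2 * (p ⬝ᵥ x) + p ⬝ᵥ p := by
    intro p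
    rw [sub_dotProduct, dotProduct_sub, dotProduct_sub, dotProduct_comm x p]
    ring
  have hsq : ∀ q : Fin n → ℝ, 0 ≤ q ⬝ᵥ q := fun q =>
    Finset.sum_nonneg fun i _ => mul_self_nonneg _
  have hle : ∀ p ∈ P, p ⬝ᵥ p ≤ x ⬝ᵥ x := fun p hp => hmax hp
  refine ⟨x, Or.inr ⟨Set.singleton_nonempty x, dotLin x, ?_⟩⟩
  ext p
  simp only [Set.mem_singleton_iff, Set.mem_ofPred_eq, dotLin, LinearMap.coe_mk, AddHom.coe_mk]
  constructor
  · rintro rfl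
    refine ⟨hx, fun q hq => ?_⟩
    have := expand q
    linarith [hsq (p - q), hle q hq]
  · rintro ⟨hp, hq⟩
    have h1 := hq x hx
    have h2 := expand p
    have h3 : (x - p) ⬝ᵥ (x - p) = 0 := le_antisymm (by linarith [hle p hp]) (hsq _)
    exact (sub_eq_zero.1 (dotProduct_self_eq_zero.1 h3)).symm

/-- A polytope has finitely many facets: a face cut out by a supporting hyperplane is determined
by the generating points it contains. -/
lemma facets_finite {n : ℕ} {P : Set (Fin n → ℝ)} (S : Finset (Fin n → ℝ))
    (hP : P = convexHull ℝ (S : Set (Fin n → ℝ))) (T : Set (Set (Fin n → ℝ)))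
    (U : Set (Fin n → ℝ) → Fin n → ℝ) (c : Set (Fin n → ℝ) → ℝ)
    (hnn : ∀ F ∈ T, ∀ x ∈ P, 0 ≤ x ⬝ᵥ U F + c F)
    (hF : ∀ F ∈ T, F = {x | x ∈ P ∧ x ⬝ᵥ U F + c F = 0}) : T.Finite := by
  have key : ∀ F ∈ T, ∀ G ∈ T, F ∩ S = G ∩ S → F ⊆ G := by
    intro F hFT G hGT h x hx
    rw [hF F hFT] at hx
    rw [hF G hGT]
    refine ⟨hx.1, ?_⟩
    have hxP := hx.1
    rw [hP, Finset.mem_convexHull'] at hxP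
    obtain ⟨w, hw0, hw1, hwx⟩ := hxP
    have lin : ∀ K, x ⬝ᵥ U K + c K = ∑ y ∈ S, w y * (y ⬝ᵥ U K + c K) := by
      intro K
      simp only [mul_add, Finset.sum_add_distrib, ← Finset.sum_mul, hw1, one_mul]
      rw [← hwx, sum_dotProduct]
      simp only [smul_dotProduct, smul_eq_mul]
    have hSP : ∀ y ∈ S, y ∈ P := fun y hy => by
      rw [hP]; exact subset_convexHull ℝ _ hy
    have h0 := hx.2
    rw [lin, Finset.sum_eq_zero_iff_of_nonneg fun y hy =>
      mul_nonneg (hw0 y hy) (hnn F hFT y (hSP y hy))] at h0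
    rw [lin]
    refine Finset.sum_eq_zero fun y hy => ?_
    rcases mul_eq_zero.1 (h0 y hy) with h1 | h1
    · rw [h1, zero_mul]
    · have : y ∈ F ∩ S := ⟨by rw [hF F hFT]; exact ⟨hSP y hy, h1⟩, hy⟩
      rw [h] at this
      have hyG := this.1
      rw [hF G hGT] at hyG
      rw [hyG.2, mul_zero]
  refine Set.Finite.of_finite_image (f := fun F => F ∩ (S : Set (Fin n → ℝ)))
    (S.finite_toSet.finite_subsets.subset ?_) ?_
  · rintro _ ⟨F, -, rfl⟩
    exact Set.inter_subset_right
  · intro F hFT G hGT h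
    exact (key F hFT G hGT h).antisymm (key G hGT F hFT h.symm)

/-- Follow the edge direction `m j` from a simple vertex `v` of a bounded polyhedron until a new
facet `G` is met; the point reached is a vertex. -/
lemma exists_next_vertex {n : ℕ} {β : Type*} {P : Set (Fin n → ℝ)} (hb : Bornology.IsBounded P)
    (T : Finset β) (U : β → Fin n → ℝ) (c : β → ℝ)
    (hP : P = {x | ∀ F ∈ T, 0 ≤ x ⬝ᵥ U F + c F}) (v : Fin n → ℝ) (hv : v ∈ P)
    (m : Fin n → Fin n → ℝ) (Fv : Fin n → β) (hFT : ∀ j, Fv j ∈ T)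
    (hzero : ∀ j, v ⬝ᵥ U (Fv j) + c (Fv j) = 0)
    (hpos : ∀ F ∈ T, F ∉ Set.range Fv → 0 < v ⬝ᵥ U F + c F)
    (hm : ∀ j k, m j ⬝ᵥ U (Fv k) = if j = k then 1 else 0) (j : Fin n) :
    ∃ x, x ≠ v ∧ x ∈ P ∧ IsFaceOf P {x} ∧ (∀ k, k ≠ j → x ⬝ᵥ U (Fv k) + c (Fv k) = 0) ∧
      ∃ G ∈ T, G ∉ Set.range Fv ∧ x ⬝ᵥ U G + c G = 0 := by
  have lin : ∀ (t : ℝ) F, (v + t • m j) ⬝ᵥ U F + c F =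
      (v ⬝ᵥ U F + c F) + t * (m j ⬝ᵥ U F) := by
    intro t F
    rw [add_dotProduct, smul_dotProduct, smul_eq_mul]
    ring
  have hvnn : ∀ F ∈ T, 0 ≤ v ⬝ᵥ U F + c F := by rw [hP] at hv; exact hv
  have hm0 : m j ≠ 0 := by
    intro h
    have := hm j j
    simp [h] at this
  have hex : (T.filter fun F => m j ⬝ᵥ U F < 0).Nonempty := by
    by_contra hemp
    rw [Finset.not_nonempty_iff_eq_empty, Finset.filter_eq_empty_iff] at hemp
    obtain ⟨R, hR⟩ := hb.exists_norm_le
    have hray : ∀ t : ℝ, 0 ≤ t → v + t • m j ∈ P := by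
      intro t ht
      rw [hP]
      intro F hF
      rw [lin]
      exact add_nonneg (hvnn F hF) (mul_nonneg ht (not_lt.1 (hemp hF)))
    have hmn : 0 < ‖m j‖ := norm_pos_iff.2 hm0
    have hR0 : 0 ≤ R := (norm_nonneg v).trans (hR v hv)
    have h1 := hR _ (hray ((R + ‖v‖ + 1) / ‖m j‖) (by positivity))
    have h2 : ‖((R + ‖v‖ + 1) / ‖m j‖) • m j‖ ≤ ‖v + ((R + ‖v‖ + 1) / ‖m j‖) • m j‖ + ‖v‖ := by
      have := norm_sub_le (v + ((R + ‖v‖ + 1) / ‖m j‖) • m j) v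
      simpa using this
    rw [norm_smul, Real.norm_of_nonneg (by positivity), div_mul_cancel₀ _ hmn.ne'] at h2
    linarith
  -- The facet met first along the ray minimizes the exit time.
  obtain ⟨G, hG, hmin⟩ := Finset.exists_min_image _
    (fun F => (v ⬝ᵥ U F + c F) / -(m j ⬝ᵥ U F)) hex
  obtain ⟨hGT, hGneg⟩ := Finset.mem_filter.1 hG
  have hGr : G ∉ Set.range Fv := by
    rintro ⟨k, rfl⟩
    rw [hm] at hGneg
    split_ifs at hGneg <;> linarith
  set t := (v ⬝ᵥ U G + c G) / -(m j ⬝ᵥ U G) with ht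
  have htpos : 0 < t := div_pos (hpos G hGT hGr) (by linarith)
  have hxG : (v + t • m j) ⬝ᵥ U G + c G = 0 := by
    rw [lin, ht]
    have : m j ⬝ᵥ U G ≠ 0 := hGneg.ne
    field_simp
    ring
  have hxP : v + t • m j ∈ P := by
    rw [hP]
    intro F hF
    rw [lin]
    by_cases hneg : m j ⬝ᵥ U F < 0
    · have := hmin F (Finset.mem_filter.2 ⟨hF, hneg⟩)
      rw [le_div_iff₀ (by linarith)] at this
      linarith
    · exact add_nonneg (hvnn F hF) (mul_nonneg htpos.le (not_lt.1 hneg))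
  have hxk : ∀ k, k ≠ j → (v + t • m j) ⬝ᵥ U (Fv k) + c (Fv k) = 0 := by
    intro k hk
    rw [lin, hzero, hm, if_neg hk.symm]
    simp
  have hnn : ∀ p ∈ P, ∀ F ∈ T, 0 ≤ p ⬝ᵥ U F + c F := by
    intro p hp
    rw [hP] at hp
    exact hp
  refine ⟨v + t • m j, ?_, hxP, Or.inr ⟨Set.singleton_nonempty _, ?_⟩, hxk, G, hGT, hGr, hxG⟩
  · intro h
    have : t • m j = 0 := by simpa using h
    exact (smul_ne_zero htpos.ne' hm0) this
  -- The negative sum of the normals of the facets through the new point exposes it.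
  refine ⟨-(dotLin (U G) + ∑ k ∈ Finset.univ.erase j, dotLin (U (Fv k))), ?_⟩
  have hval : ∀ p : Fin n → ℝ,
      (-(dotLin (U G) + ∑ k ∈ Finset.univ.erase j, dotLin (U (Fv k)))) p =
      c G + (∑ k ∈ Finset.univ.erase j, c (Fv k)) - ((p ⬝ᵥ U G + c G) +
        ∑ k ∈ Finset.univ.erase j, (p ⬝ᵥ U (Fv k) + c (Fv k))) := by
    intro p
    simp only [LinearMap.neg_apply, LinearMap.add_apply, LinearMap.sum_apply, dotLin,
      LinearMap.coe_mk, AddHom.coe_mk, Finset.sum_add_distrib]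
    ring
  have hsum0 : ∑ k ∈ Finset.univ.erase j, ((v + t • m j) ⬝ᵥ U (Fv k) + c (Fv k)) = 0 :=
    Finset.sum_eq_zero fun k hk => hxk k (Finset.ne_of_mem_erase hk)
  have hsnn : ∀ p ∈ P, 0 ≤ ∑ k ∈ Finset.univ.erase j, (p ⬝ᵥ U (Fv k) + c (Fv k)) :=
    fun p hp => Finset.sum_nonneg fun k _ => hnn p hp _ (hFT k)
  ext p
  simp only [Set.mem_singleton_iff, Set.mem_ofPred_eq, hval]
  constructor
  · rintro rfl
    refine ⟨hxP, fun q hq => ?_⟩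
    rw [hxG, hsum0]
    linarith [hnn q hq G hGT, hsnn q hq]
  · rintro ⟨hp, hq⟩
    have h1 := hq _ hxP
    rw [hxG, hsum0] at h1
    have h2 := hnn p hp G hGT
    have h3 := hsnn p hp
    have h4 : p ⬝ᵥ U G + c G = 0 := by linarith
    have h5 : ∑ k ∈ Finset.univ.erase j, (p ⬝ᵥ U (Fv k) + c (Fv k)) = 0 := by linarith
    rw [Finset.sum_eq_zero_iff_of_nonneg fun k _ => hnn p hp _ (hFT k)] at h5
    have h6 := expand_of_dual m (fun k => U (Fv k)) hm (p - v)
    rw [← Finset.add_sum_erase _ _ (Finset.mem_univ j), Finset.sum_eq_zero (fun k hk => ?_),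
      add_zero] at h6
    · have h7 : p = v + ((p - v) ⬝ᵥ U (Fv j)) • m j := by rw [← h6]; abel
      have h8 := h4
      rw [h7, lin] at h8
      rw [lin] at hxG
      have : (p - v) ⬝ᵥ U (Fv j) = t := mul_right_cancel₀ hGneg.ne (by linarith)
      rw [this] at h7
      exact h7
    · have e1 := h5 k hk
      have e2 := hzero k
      rw [sub_dotProduct]
      have : p ⬝ᵥ U (Fv k) - v ⬝ᵥ U (Fv k) = 0 := by linarith
      rw [this, zero_smul]

/-! ### The perturbed polytope -/

/-- Finitely many strict inequalities `0 < f i` survive a uniform perturbation of size `ε * k i`. -/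
lemma exists_uniform_eps {ι : Type*} [Finite ι] (f k : ι → ℝ) (hf : ∀ i, 0 < f i) :
    ∃ ε > 0, ∀ i, ε * k i < f i := by
  have h : ∀ᶠ ε : ℝ in nhdsWithin 0 (Set.Ioi 0), ∀ i, ε * k i < f i := by
    refine Filter.eventually_all.2 fun i => ?_
    have hc : Filter.Tendsto (fun ε : ℝ => ε * k i) (nhdsWithin 0 (Set.Ioi 0)) (nhds 0) := by
      have : Continuous fun ε : ℝ => ε * k i := by fun_prop
      simpa using (this.tendsto 0).mono_left nhdsWithin_le_nhds
    exact hc.eventually_lt_const (hf i)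
  obtain ⟨ε, h1, h2⟩ := (h.and self_mem_nhdsWithin).exists
  exact ⟨ε, h2, h1⟩

/-- Let `P ⊂ ℝ^n` be a full-dimensional simple lattice polytope with
Brion–Vergne vertex data, and `y ∈ ℝ` with `y + 1 > 0`.  For a multiparameter `h`
indexed by the facets, let `P̃(h) = {x : ⟨x,u_F⟩ + (y+1)λ_F + h_F ≥ 0 ∀ F}`.  Then there
is `ε > 0` so that for all `h` with `|h_F| < ε` and all `z` with `⟨m_v^F,z⟩ ≠ 0`:
`∫_{P̃(h)} e^{⟨x,z⟩} dx = (-1)^n ∑_v (e^{⟨v(h),z⟩}/|G(σ_v)|) ∏_{F ∈ 𝓕^v} 1/⟨m_v^F,z⟩`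
with `v(h) = (y+1)v - ∑_{F ∈ 𝓕^v} h_F m_v^F`. -/
theorem stmt17 (n : ℕ) (P : Set (Fin n → ℝ))
    (S : Finset (Fin n → ℤ))
    (hP : P = convexHull ℝ (intVec '' (S : Set (Fin n → ℤ))))
    (hfull : affineSpan ℝ P = ⊤) (hsimple : IsSimple P)
    (u : Set (Fin n → ℝ) → (Fin n → ℤ)) (lam : Set (Fin n → ℝ) → ℤ)
    (hPdesc : P = {x | ∀ F, IsFaceOf P F → faceDim F = n - 1 →
      0 ≤ (∑ i, x i * (u F i : ℝ)) + (lam F : ℝ)})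
    (hprim : ∀ F, IsFaceOf P F → faceDim F = n - 1 →
      ∀ c : ℤ, 0 < c → (∀ i, c ∣ u F i) → c = 1)
    (hfacet : ∀ F, IsFaceOf P F → faceDim F = n - 1 →
      F = {x | x ∈ P ∧ (∑ i, x i * (u F i : ℝ)) + (lam F : ℝ) = 0})
    (Fv : (Fin n → ℝ) → Fin n → Set (Fin n → ℝ))
    (hFv : ∀ x, IsFaceOf P {x} → Function.Injective (Fv x) ∧
      (∀ j, IsFaceOf P (Fv x j) ∧ faceDim (Fv x j) = n - 1 ∧ x ∈ Fv x j) ∧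
      (∀ F, IsFaceOf P F → faceDim F = n - 1 → x ∈ F → ∃ j, F = Fv x j))
    (m : (Fin n → ℝ) → Fin n → (Fin n → ℝ))
    (hm : ∀ x, IsFaceOf P {x} → ∀ j j' : Fin n,
      (∑ i, m x j i * (u (Fv x j') i : ℝ)) = if j = j' then 1 else 0)
    (y : ℝ) (hy : 0 < y + 1) :
    ∃ ε > (0 : ℝ), ∀ h : Set (Fin n → ℝ) → ℝ,
      (∀ F, IsFaceOf P F → faceDim F = n - 1 → |h F| < ε) →
      ∀ z : Fin n → ℂ, (∀ x, IsFaceOf P {x} → ∀ j : Fin n, cpair (m x j) z ≠ 0) →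
        ∫ xx in {x : Fin n → ℝ | ∀ F, IsFaceOf P F → faceDim F = n - 1 →
            0 ≤ (∑ i, x i * (u F i : ℝ)) + (y + 1) * (lam F : ℝ) + h F},
          Complex.exp (cpair xx z)
        = (-1 : ℂ) ^ n * ∑ᶠ x ∈ {x : Fin n → ℝ | IsFaceOf P {x}},
            Complex.exp (cpair ((y + 1) • x - ∑ j : Fin n, h (Fv x j) • m x j) z) /
                (Nat.card ((Fin n → ℤ) ⧸ normalLattice u Fv x) : ℂ) *
              ∏ j : Fin n, (cpair (m x j) z)⁻¹ := by
  -- The facets and their affine functions `x ↦ ⟨x, U F⟩ + c F`.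
  let Ts : Set (Set (Fin n → ℝ)) := {F | IsFaceOf P F ∧ faceDim F = n - 1}
  let U : Set (Fin n → ℝ) → Fin n → ℝ := fun F => intVec (u F)
  let c : Set (Fin n → ℝ) → ℝ := fun F => (lam F : ℝ)
  have hnn : ∀ F ∈ Ts, ∀ x ∈ P, 0 ≤ x ⬝ᵥ U F + c F := by
    intro F hF x hx
    rw [hPdesc] at hx
    exact hx F hF.1 hF.2
  have hFeq : ∀ F ∈ Ts, F = {x | x ∈ P ∧ x ⬝ᵥ U F + c F = 0} := fun F hF =>
    hfacet F hF.1 hF.2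
  have hTfin : Ts.Finite := by
    refine facets_finite (S.image intVec) ?_ Ts U c hnn hFeq
    rw [hP, Finset.coe_image]
  let T : Finset (Set (Fin n → ℝ)) := hTfin.toFinset
  have hT : ∀ F, F ∈ T ↔ F ∈ Ts := fun F => hTfin.mem_toFinset
  have hPT : P = {x | ∀ F ∈ T, 0 ≤ x ⬝ᵥ U F + c F} := by
    ext x
    constructor
    · exact fun hx F hF => hnn F ((hT F).1 hF) x hx
    · intro hx
      rw [hPdesc]
      exact fun F h1 h2 => hx F ((hT F).2 ⟨h1, h2⟩)
  have hcomp : IsCompact P := by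
    rw [hP]
    exact ((S.finite_toSet).image intVec).isCompact_convexHull (𝕜 := ℝ)
  have hne : P.Nonempty := by
    rw [Set.nonempty_iff_ne_empty]
    rintro rfl
    rw [AffineSubspace.span_empty] at hfull
    exact bot_ne_top hfull
  -- Vertices are the points forming a face of `P`.
  let α := {x : Fin n → ℝ // IsFaceOf P {x}}
  obtain ⟨x₀, hx₀⟩ := exists_vertex hcomp hne
  have : Nonempty α := ⟨⟨x₀, hx₀⟩⟩
  have hinj : ∀ v : α, Function.Injective (Fv v.1) := fun v => (hFv v.1 v.2).1
  have hFT : ∀ (v : α) j, Fv v.1 j ∈ T := fun v j =>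
    (hT _).2 ⟨((hFv v.1 v.2).2.1 j).1, ((hFv v.1 v.2).2.1 j).2.1⟩
  have hzero : ∀ (v : α) j, v.1 ⬝ᵥ U (Fv v.1 j) + c (Fv v.1 j) = 0 := by
    intro v j
    have h := ((hFv v.1 v.2).2.1 j).2.2
    rw [hFeq _ ((hT _).1 (hFT v j))] at h
    exact h.2
  have hpos : ∀ v : α, ∀ F ∈ T, F ∉ Set.range (Fv v.1) → 0 < v.1 ⬝ᵥ U F + c F := by
    intro v F hF hr
    have hF' := (hT F).1 hF
    refine lt_of_le_of_ne (hnn F hF' v.1 (mem_of_isFaceOf v.2)) fun h0 => hr ?_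
    have hvF : v.1 ∈ F := by
      rw [hFeq F hF']
      exact ⟨mem_of_isFaceOf v.2, h0.symm⟩
    obtain ⟨j, hj⟩ := (hFv v.1 v.2).2.2 F hF'.1 hF'.2 hvF
    exact ⟨j, hj.symm⟩
  have hmU : ∀ (v : α) j k, m v.1 j ⬝ᵥ U (Fv v.1 k) = if j = k then 1 else 0 :=
    fun v j k => hm v.1 v.2 j k
  let Fs : α → Finset (Set (Fin n → ℝ)) := fun v => Finset.univ.image (Fv v.1)
  let M : α → Set (Fin n → ℝ) → Fin n → ℝ := fun v => Function.extend (Fv v.1) (m v.1) 0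
  have hM : ∀ v j, M v (Fv v.1 j) = m v.1 j := fun v j => (hinj v).extend_apply _ _ j
  have hFs : ∀ v F, F ∈ Fs v ↔ F ∈ Set.range (Fv v.1) := fun v F => by simp [Fs]
  have hcard : ∀ v, (Fs v).card = n := fun v => by
    rw [Finset.card_image_of_injective _ (hinj v), Finset.card_fin]
  have hFs_sub : ∀ v, Fs v ⊆ T := by
    intro v F hF
    obtain ⟨j, rfl⟩ := (hFs v F).1 hF
    exact hFT v j
  -- A vertex is determined by the facets through it, since their normals form a basis.
  have hFs_inj : ∀ v w, Fs v = Fs w → v = w := by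
    intro v w h
    have h1 := expand_of_dual (m v.1) (fun j => U (Fv v.1 j)) (hmU v) (w.1 - v.1)
    have h2 : ∀ j, (w.1 - v.1) ⬝ᵥ U (Fv v.1 j) = 0 := by
      intro j
      have : Fv v.1 j ∈ Fs w := h ▸ (hFs v _).2 ⟨j, rfl⟩
      obtain ⟨k, hk⟩ := (hFs w _).1 this
      have hw := hzero w k
      rw [hk] at hw
      rw [sub_dotProduct]
      linarith [hzero v j]
    simp only [h2, zero_smul, Finset.sum_const_zero] at h1
    exact Subtype.ext (sub_eq_zero.1 h1).symm
  have hfin : Finite α := by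
    refine Finite.of_injective (β := {A // A ∈ T.powerset})
      (fun v => ⟨Fs v, Finset.mem_powerset.2 (hFs_sub v)⟩) fun v w h => ?_
    exact hFs_inj v w (congrArg Subtype.val h)
  have : Fintype α := Fintype.ofFinite α
  have hnb : ∀ v, ∀ F ∈ Fs v, ∃ w, w ≠ v ∧ ∃ G ∈ Fs w, (Fs w).erase G = (Fs v).erase F := by
    intro v F hF
    obtain ⟨j, rfl⟩ := (hFs v F).1 hF
    obtain ⟨x, hxv, hxP, hx, hxk, G, hGT, hGr, hG0⟩ := exists_next_vertex hcomp.isBounded T U c hPT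
      v.1 (mem_of_isFaceOf v.2) (m v.1) (Fv v.1) (hFT v) (hzero v) (hpos v) (hmU v) j
    let w : α := ⟨x, hx⟩
    have hmem : ∀ F ∈ T, x ⬝ᵥ U F + c F = 0 → F ∈ Fs w := by
      intro F hF h0
      by_contra hcon
      exact (hpos w F hF fun hr => hcon ((hFs w F).2 hr)).ne' h0
    have hGv : G ∉ (Fs v).erase (Fv v.1 j) := fun h =>
      hGr ((hFs v G).1 (Finset.mem_of_mem_erase h))
    have hsub : insert G ((Fs v).erase (Fv v.1 j)) ⊆ Fs w := by
      intro F hF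
      rcases Finset.mem_insert.1 hF with rfl | hF
      · exact hmem _ hGT hG0
      · obtain ⟨hne', hF⟩ := Finset.mem_erase.1 hF
        obtain ⟨k, rfl⟩ := (hFs v F).1 hF
        exact hmem _ (hFT v k) (hxk k fun hkj => hne' (hkj ▸ rfl))
    -- Both sides have `n` elements.
    have heq : insert G ((Fs v).erase (Fv v.1 j)) = Fs w := by
      refine Finset.eq_of_subset_of_card_le hsub ?_
      rw [Finset.card_insert_of_notMem hGv, Finset.card_erase_add_one hF, hcard, hcard]
    refine ⟨w, fun h => hxv (congrArg Subtype.val h), G, hsub (Finset.mem_insert_self _ _), ?_⟩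
    rw [← heq, Finset.erase_insert hGv]
  -- For small `h` no vertex crosses a facet not containing it.
  obtain ⟨ε, hε, hε'⟩ := exists_uniform_eps
    (ι := {i : α × {F // F ∈ T} // i.2.1 ∉ Set.range (Fv i.1.1)})
    (fun i => (y + 1) * (i.1.1.1 ⬝ᵥ U i.1.2.1 + c i.1.2.1))
    (fun i => 1 + ∑ j, |m i.1.1.1 j ⬝ᵥ U i.1.2.1|)
    (fun i => mul_pos hy (hpos _ _ i.1.2.2 i.2))
  refine ⟨ε, hε, fun h hh z hz => ?_⟩
  have hhT : ∀ F ∈ T, |h F| < ε := fun F hF => hh F ((hT F).1 hF).1 ((hT F).1 hF).2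
  let p : α → Fin n → ℝ := fun v => (y + 1) • v.1 - ∑ j, h (Fv v.1 j) • m v.1 j
  have hp : ∀ v F, p v ⬝ᵥ U F + ((y + 1) * c F + h F) =
      (y + 1) * (v.1 ⬝ᵥ U F + c F) + h F - ∑ j, h (Fv v.1 j) * (m v.1 j ⬝ᵥ U F) := by
    intro v F
    simp only [p, sub_dotProduct, smul_dotProduct, sum_dotProduct, smul_eq_mul]
    ring
  let D : PolarData n α (Set (Fin n → ℝ)) :=
    { T := T
      u := U
      b := fun F => (y + 1) * c F + h F
      Fs := Fs
      M := M
      p := p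
      Fs_sub := hFs_sub
      Fs_inj := hFs_inj
      dual := by
        intro v F hF G hG
        obtain ⟨j, rfl⟩ := (hFs v F).1 hF
        obtain ⟨k, rfl⟩ := (hFs v G).1 hG
        rw [hM, hmU]
        simp [(hinj v).eq_iff]
      expand := by
        intro v d
        rw [Finset.sum_image fun a _ b _ hab => hinj v hab]
        simp only [hM]
        exact expand_of_dual (m v.1) (fun j => U (Fv v.1 j)) (hmU v) d
      zero := by
        intro v F hF
        obtain ⟨k, rfl⟩ := (hFs v F).1 hF
        rw [hp, hzero]
        simp [hmU]
      pos := by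
        intro v F hF hFv'
        have hr : F ∉ Set.range (Fv v.1) := fun hr => hFv' ((hFs v F).2 hr)
        have h1 : ε * (1 + ∑ j, |m v.1 j ⬝ᵥ U F|) < (y + 1) * (v.1 ⬝ᵥ U F + c F) :=
          hε' ⟨(v, ⟨F, hF⟩), hr⟩
        have h2 : ∑ j, h (Fv v.1 j) * (m v.1 j ⬝ᵥ U F) ≤ ε * ∑ j, |m v.1 j ⬝ᵥ U F| := by
          rw [Finset.mul_sum]
          refine Finset.sum_le_sum fun j _ => (le_abs_self _).trans ?_
          rw [abs_mul]
          exact mul_le_mul_of_nonneg_right (hhT _ (hFT v j)).le (abs_nonneg _)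
        have h3 := (abs_lt.1 (hhT F hF)).1
        rw [hp]
        linarith
      nb := hnb }
  have key := D.integral_body (fun v => Fv v.1) hinj (fun v => rfl) z
    (fun v j => by
      change cpair (M v (Fv v.1 j)) z ≠ 0
      rw [hM]
      exact hz v.1 v.2 j)
  have hbody : {x : Fin n → ℝ | ∀ F, IsFaceOf P F → faceDim F = n - 1 →
      0 ≤ (∑ i, x i * (u F i : ℝ)) + (y + 1) * (lam F : ℝ) + h F} = D.body := by
    ext x
    constructor
    · intro hx F hF
      have := hx F ((hT F).1 hF).1 ((hT F).1 hF).2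
      rw [add_assoc] at this
      exact this
    · intro hx F h1 h2
      rw [add_assoc]
      exact hx F ((hT F).2 ⟨h1, h2⟩)
  have hsum : ∀ f : (Fin n → ℝ) → ℂ,
      ∑ᶠ x ∈ {x : Fin n → ℝ | IsFaceOf P {x}}, f x = ∑ v : α, f v.1 := by
    intro f
    rw [← finsum_set_coe_eq_finsum_mem]
    exact finsum_eq_sum_of_fintype (fun v : α => f v.1)
  rw [hbody, key, hsum, Finset.mul_sum]
  unfold PolarData.vertexSum
  refine Finset.sum_congr rfl fun v _ => ?_
  change Complex.exp (cpair (p v) z) *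
      ((|(Matrix.of fun j => M v (Fv v.1 j)).det| : ℝ) : ℂ) *
      ∏ j, -(cpair (M v (Fv v.1 j)) z)⁻¹ = _
  simp only [hM]
  have hdet : |(Matrix.of fun j => m v.1 j).det| =
      ((Nat.card ((Fin n → ℤ) ⧸ normalLattice u Fv v.1) : ℕ) : ℝ)⁻¹ :=
    abs_det_eq_inv_card (fun j => u (Fv v.1 j)) (m v.1) (hmU v)
  rw [hdet, Finset.prod_neg, Finset.card_univ, Fintype.card_fin]
  push_cast
  ring
end
end
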